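/- arXiv:2005.12305 — 3 statements merged into one kernel-verified Lean document; each statement's English description precedes it below -/
import Mathlib

section
/- Let n ≥ 2 and 1 ≤ k ≤ n−1. The number of decorated ordered set partitions of type Δ_{k,n} equals the number of fixed-point-free permutations σ of {1,…,n} with exactly k ascents, i.e. with #{i ∈ {1,…,n} : σ(i) > i} = k (so that the remaining n−k positions satisfy σ(i) < i). -/
open Finset

/-- A decorated ordered set partition of type `Δ_{k,n}`: an ordered set partition
`(S_1,…,S_ℓ)` of `{1,…,n}` into nonempty blocks, with integer weights
`1 ≤ s_i ≤ |S_i| − 1` summing to `k`. -/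
structure DOSP (n k : ℕ) where
  len : ℕ
  len_pos : 0 < len
  S : Fin len → Finset (Fin n)
  wt : Fin len → ℕ
  blocks_nonempty : ∀ i, (S i).Nonempty
  blocks_disjoint : ∀ i j, i ≠ j → Disjoint (S i) (S j)
  blocks_cover : ∀ x : Fin n, ∃ i, x ∈ S i
  wt_lower : ∀ i, 1 ≤ wt i
  wt_upper : ∀ i, wt i ≤ (S i).card - 1
  wt_sum : ∑ i, wt i = k

/-!
Let `D A` be the polynomial counting the permutations with support exactly `A` by excedances. For
`A` nonempty, composing with the inverse of the cyclic successor of `A` turns the permutations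
supported in `A` with `k` excedances into those with `k + 1` weak excedances in `A`. Grouping the
permutations on both sides by their support, this reads
`∑ C ⊆ A, D C * X ^ #(A \ C) = ∑ C ⊆ A, D C * X`. Dividing by `X - 1` gives
`D A = ∑ C ⊂ A, D C * (X + X ^ 2 + ⋯ + X ^ (#(A \ C) - 1))`, which is the recursion for decorated
ordered set partitions of `A` obtained by removing the first block `A \ C`.
-/

lemma support_mul_subset_iff {α : Type*} [Fintype α] [DecidableEq α] {A : Finset α}
    {σ τ : Equiv.Perm α} (hτ : τ.support ⊆ A) :
    (σ * τ).support ⊆ A ↔ σ.support ⊆ A := by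
  have hmul {ρ π : Equiv.Perm α} (hρ : ρ.support ⊆ A) (hπ : π.support ⊆ A) :
      (ρ * π).support ⊆ A :=
    (Equiv.Perm.support_mul_le ρ π).trans (union_subset hρ hπ)
  refine ⟨fun h => ?_, fun h => hmul h hτ⟩
  simpa only [mul_inv_cancel_right] using hmul h ((Equiv.Perm.support_inv τ).trans_subset hτ)

section CyclicSucc

variable {α : Type*} [LinearOrder α]

/-- The permutation sending each element of `A` to the next larger one, the largest element of `A`
to the smallest one, and fixing everything outside `A`. -/
def cyclicSucc (A : Finset α) : Equiv.Perm α := A.sort.formPerm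

lemma support_cyclicSucc_subset [Fintype α] (A : Finset α) : (cyclicSucc A).support ⊆ A := by
  intro i hi
  exact (mem_sort (· ≤ ·)).1 (List.mem_of_formPerm_apply_ne (Equiv.Perm.mem_support.1 hi))

lemma cyclicSucc_le_iff {A : Finset α} (hA : A.Nonempty) {i x : α} (hi : i ∈ A) (hx : x ∈ A) :
    cyclicSucc A i ≤ x ↔ i = A.max' hA ∨ i < x := by
  obtain ⟨a, ha, rfl⟩ := List.getElem_of_mem ((mem_sort (· ≤ ·)).2 hi)
  obtain ⟨b, hb, rfl⟩ := List.getElem_of_mem ((mem_sort (· ≤ ·)).2 hx)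
  have hsort := A.sortedLT_sort
  rw [cyclicSucc, List.formPerm_apply_getElem _ (A.sort_nodup (· ≤ ·)), max'_eq_sorted_last,
    hsort.getElem_le_getElem_iff, hsort.getElem_lt_getElem_iff, hsort.nodup.getElem_inj_iff]
  rcases (Nat.succ_le_of_lt ha).eq_or_lt with hlast | hlast
  · simp only [← hlast, Nat.succ_eq_add_one, Nat.mod_self]
    omega
  · rw [Nat.mod_eq_of_lt hlast]
    omega

end CyclicSucc

section Excedances

variable {α : Type*} [LinearOrder α]

/-- The weak excedances of a permutation that lie in `A`; for a permutation supported in `A`, these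
are its excedances together with its fixed points in `A`. -/
def weakExcedances (A : Finset α) (σ : Equiv.Perm α) : Finset α := {i ∈ A | i ≤ σ i}

lemma mem_weakExcedances {A : Finset α} {σ : Equiv.Perm α} {i : α} :
    i ∈ weakExcedances A σ ↔ i ∈ A ∧ i ≤ σ i :=
  mem_filter

variable [Fintype α]

/-- The excedances (called ascents in the theorem) of a permutation. -/
def excedances (σ : Equiv.Perm α) : Finset α := {i | i < σ i}

lemma mem_excedances {σ : Equiv.Perm α} {i : α} : i ∈ excedances σ ↔ i < σ i :=
  mem_filter_univ i

lemma excedances_subset_support (σ : Equiv.Perm α) : excedances σ ⊆ σ.support := fun _ hi =>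
  Equiv.Perm.mem_support.2 (mem_excedances.1 hi).ne'

lemma card_weakExcedances {A : Finset α} {σ : Equiv.Perm α} (hσ : σ.support ⊆ A) :
    #(weakExcedances A σ) = #(excedances σ) + #(A \ σ.support) := by
  have hunion : weakExcedances A σ = excedances σ ∪ A \ σ.support := by
    ext i
    have hmem : i < σ i → i ∈ A := fun hi => hσ (excedances_subset_support σ (mem_excedances.2 hi))
    simp only [mem_weakExcedances, mem_excedances, mem_union, mem_sdiff,
      Equiv.Perm.notMem_support, le_iff_lt_or_eq, eq_comm (a := i)]
    tauto
  rw [hunion, card_union_of_disjoint]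
  exact disjoint_sdiff.mono_left (excedances_subset_support σ)

lemma weakExcedances_mul_inv_cyclicSucc {A : Finset α} (hA : A.Nonempty) {σ : Equiv.Perm α}
    (hσ : σ.support ⊆ A) :
    weakExcedances A (σ * (cyclicSucc A)⁻¹) =
      (insert (A.max' hA) (excedances σ)).map (cyclicSucc A).toEmbedding := by
  ext j
  obtain ⟨i, rfl⟩ := (cyclicSucc A).surjective j
  have hcyc : cyclicSucc A i ∈ A ↔ i ∈ A :=
    Equiv.Perm.isInvariant_of_support_le (support_cyclicSucc_subset A) i
  have hσi : i ∈ A → σ i ∈ A := (Equiv.Perm.isInvariant_of_support_le hσ i).2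
  simp only [mem_weakExcedances, mem_excedances, mem_map_equiv, mem_insert, Equiv.Perm.mul_apply,
    Equiv.Perm.inv_def, Equiv.symm_apply_apply, hcyc]
  constructor
  · exact fun ⟨hi, hle⟩ => (cyclicSucc_le_iff hA hi (hσi hi)).1 hle
  · intro h
    have hi : i ∈ A := h.elim (fun hmax => hmax ▸ A.max'_mem hA) fun hlt =>
      hσ (Equiv.Perm.mem_support.2 hlt.ne')
    exact ⟨hi, (cyclicSucc_le_iff hA hi (hσi hi)).2 h⟩

lemma card_weakExcedances_mul_inv_cyclicSucc {A : Finset α} (hA : A.Nonempty) {σ : Equiv.Perm α}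
    (hσ : σ.support ⊆ A) :
    #(weakExcedances A (σ * (cyclicSucc A)⁻¹)) = #(excedances σ) + 1 := by
  have hmax : A.max' hA ∉ excedances σ := by
    simpa only [mem_excedances, not_lt] using A.le_max' _
      ((Equiv.Perm.isInvariant_of_support_le hσ _).2 (A.max'_mem hA))
  rw [weakExcedances_mul_inv_cyclicSucc hA hσ, card_map, card_insert_of_notMem hmax]

lemma sum_comp_card_weakExcedances {M : Type*} [AddCommMonoid M] {A : Finset α}
    (hA : A.Nonempty) (f : ℕ → M) :
    ∑ σ : Equiv.Perm α with σ.support ⊆ A, f #(weakExcedances A σ) =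
      ∑ σ : Equiv.Perm α with σ.support ⊆ A, f (#(excedances σ) + 1) := by
  symm
  refine sum_equiv (Equiv.mulRight (cyclicSucc A)⁻¹) (fun σ => ?_) fun σ hσ => ?_
  · have hinv : (cyclicSucc A)⁻¹.support ⊆ A :=
      (Equiv.Perm.support_inv _).trans_subset (support_cyclicSucc_subset A)
    rw [mem_filter_univ, mem_filter_univ, Equiv.coe_mulRight, support_mul_subset_iff hinv]
  · rw [Equiv.coe_mulRight, card_weakExcedances_mul_inv_cyclicSucc hA (mem_filter.1 hσ).2]

open Polynomial

/-- The excedance enumerator of the derangements of `A`, encoded as the permutations of the ambient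
type whose support is exactly `A`. -/
noncomputable def derangementPoly (A : Finset α) : ℤ[X] :=
  ∑ σ : Equiv.Perm α with σ.support = A, X ^ #(excedances σ)

lemma derangementPoly_empty : derangementPoly (∅ : Finset α) = 1 := by
  simp [derangementPoly, excedances, filter_eq']

lemma sum_derangementPoly_mul (A : Finset α) (f : Finset α → ℤ[X]) :
    ∑ C ∈ A.powerset, derangementPoly C * f C =
      ∑ σ : Equiv.Perm α with σ.support ⊆ A, X ^ #(excedances σ) * f σ.support := by
  rw [← sum_fiberwise_of_maps_to (g := Equiv.Perm.support) (t := A.powerset)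
    fun σ hσ => mem_powerset.2 (mem_filter.1 hσ).2]
  refine sum_congr rfl fun C hC => ?_
  have hfiber (σ : Equiv.Perm α) : σ.support ⊆ A ∧ σ.support = C ↔ σ.support = C :=
    and_iff_right_of_imp fun h => h.trans_subset (mem_powerset.1 hC)
  simp only [filter_filter, hfiber]
  rw [derangementPoly, sum_mul]
  exact sum_congr rfl fun σ hσ => by rw [(mem_filter.1 hσ).2]

lemma sum_derangementPoly_mul_X_pow {A : Finset α} (hA : A.Nonempty) :
    ∑ C ∈ A.powerset, derangementPoly C * X ^ #(A \ C) =
      ∑ C ∈ A.powerset, derangementPoly C * X := by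
  rw [sum_derangementPoly_mul A fun C => X ^ #(A \ C), sum_derangementPoly_mul A fun _ => X]
  calc ∑ σ : Equiv.Perm α with σ.support ⊆ A, X ^ #(excedances σ) * X ^ #(A \ σ.support)
      = ∑ σ : Equiv.Perm α with σ.support ⊆ A, (X : ℤ[X]) ^ #(weakExcedances A σ) :=
        sum_congr rfl fun σ hσ => by rw [card_weakExcedances (mem_filter.1 hσ).2, pow_add]
    _ = ∑ σ : Equiv.Perm α with σ.support ⊆ A, X ^ (#(excedances σ) + 1) :=
        sum_comp_card_weakExcedances hA (X ^ ·)
    _ = ∑ σ : Equiv.Perm α with σ.support ⊆ A, X ^ #(excedances σ) * X := by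
        simp only [pow_succ]

theorem derangementPoly_eq_sum_ssubsets {A : Finset α} (hA : A.Nonempty) :
    derangementPoly A =
      ∑ C ∈ A.ssubsets, derangementPoly C * ∑ s ∈ Ico 1 #(A \ C), X ^ s := by
  have hgeom : ∀ C ∈ A.ssubsets,
      (∑ s ∈ Ico 1 #(A \ C), (X : ℤ[X]) ^ s) * (X - 1) = X ^ #(A \ C) - X := fun C hC => by
    have hpos : 1 ≤ #(A \ C) := card_pos.2 (sdiff_nonempty.2 (mem_ssubsets.1 hC).2)
    rw [geom_sum_Ico_mul X hpos, pow_one]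
  have hzero : ∑ C ∈ A.powerset, derangementPoly C * (X ^ #(A \ C) - X) = 0 := by
    simp only [mul_sub, sum_sub_distrib, sum_derangementPoly_mul_X_pow hA, sub_self]
  apply mul_right_cancel₀ (X_sub_C_ne_zero (1 : ℤ))
  calc derangementPoly A * (X - 1)
      = ∑ C ∈ A.ssubsets, derangementPoly C * (X ^ #(A \ C) - X) := by
        rw [ssubsets, sum_erase_eq_sub (mem_powerset_self A), hzero, Finset.sdiff_self, card_empty]
        ring
    _ = (∑ C ∈ A.ssubsets, derangementPoly C * ∑ s ∈ Ico 1 #(A \ C), X ^ s) * (X - 1) := by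
        rw [sum_mul]
        exact sum_congr rfl fun C hC => by rw [mul_assoc, hgeom C hC]

end Excedances

section WeightedPartitions

variable {α : Type*} [DecidableEq α]

/-- The decorated ordered set partitions of `A`, of all types, as lists of pairs (block, weight).
The recursion runs over the complement `C` of the first block. Unlike in `DOSP`, the empty list is
allowed: it is the only partition of `∅`. -/
def weightedPartitions (A : Finset α) : Finset (List (Finset α × ℕ)) :=
  if A = ∅ then {[]} else
    (A.ssubsets.attach.sigma fun C => Ico 1 #(A \ C.1) ×ˢ weightedPartitions C.1).image
      fun x => (A \ x.1.1, x.2.1) :: x.2.2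
termination_by #A
decreasing_by exact card_lt_card (mem_ssubsets.1 C.2)

lemma weightedPartitions_empty : weightedPartitions (∅ : Finset α) = {[]} := by
  rw [weightedPartitions, if_pos rfl]

lemma nil_mem_weightedPartitions {A : Finset α} : [] ∈ weightedPartitions A ↔ A = ∅ := by
  rw [weightedPartitions]
  split_ifs with hA <;> simp [hA]

lemma cons_mem_weightedPartitions {A : Finset α} {p : Finset α × ℕ}
    {l : List (Finset α × ℕ)} :
    p :: l ∈ weightedPartitions A ↔
      p.1 ⊆ A ∧ (1 ≤ p.2 ∧ p.2 < #p.1) ∧ l ∈ weightedPartitions (A \ p.1) := by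
  obtain ⟨B, s⟩ := p
  rcases A.eq_empty_or_nonempty with rfl | hA
  · simp only [weightedPartitions_empty, mem_singleton, reduceCtorEq, subset_empty, false_iff]
    rintro ⟨rfl, hs, -⟩
    simp at hs
  rw [weightedPartitions, if_neg hA.ne_empty]
  simp only [mem_image, mem_sigma, mem_attach, true_and, mem_product, mem_Ico, Sigma.exists,
    Subtype.exists, Prod.exists, mem_ssubsets, List.cons.injEq, Prod.mk.injEq]
  constructor
  · rintro ⟨C, hC, s, l, ⟨hs, hl⟩, ⟨rfl, rfl⟩, rfl⟩
    exact ⟨sdiff_subset, hs, by rwa [Finset.sdiff_sdiff_eq_self hC.subset]⟩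
  · rintro ⟨hB, hs, hl⟩
    have hBne : B.Nonempty := card_pos.1 (by omega)
    have hBA : A \ (A \ B) = B := Finset.sdiff_sdiff_eq_self hB
    exact ⟨A \ B, sdiff_ssubset hB hBne, s, l, ⟨hBA.symm ▸ hs, hl⟩, ⟨hBA, rfl⟩, rfl⟩

lemma mem_weightedPartitions {A : Finset α} {l : List (Finset α × ℕ)} :
    l ∈ weightedPartitions A ↔ (∀ p ∈ l, 1 ≤ p.2 ∧ p.2 < #p.1) ∧
      l.Pairwise (fun p q => Disjoint p.1 q.1) ∧ ∀ x, x ∈ A ↔ ∃ p ∈ l, x ∈ p.1 := by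
  induction l generalizing A with
  | nil => simp [nil_mem_weightedPartitions, eq_empty_iff_forall_notMem]
  | cons p l ih =>
    rw [cons_mem_weightedPartitions, ih]
    simp only [forall_eq_or_imp, List.pairwise_cons, List.mem_cons, exists_eq_or_imp, mem_sdiff,
      Finset.disjoint_left]
    constructor
    · rintro ⟨hpA, hp, hl, hdisj, hcover⟩
      refine ⟨⟨hp, hl⟩, ⟨fun q hq x hx hxq => ((hcover x).2 ⟨q, hq, hxq⟩).2 hx, hdisj⟩, fun x => ?_⟩
      rw [← hcover]
      have hx : x ∈ p.1 → x ∈ A := @hpA x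
      tauto
    · rintro ⟨⟨hp, hl⟩, ⟨hpl, hdisj⟩, hcover⟩
      refine ⟨fun x hx => (hcover x).2 (Or.inl hx), hp, hl, hdisj, fun x => ?_⟩
      rw [hcover]
      constructor
      · tauto
      · rintro ⟨q, hq, hx⟩
        exact ⟨Or.inr ⟨q, hq, hx⟩, fun hxp => hpl q hq hxp hx⟩

open Polynomial

lemma sum_weightedPartitions_eq_sum_ssubsets {A : Finset α} (hA : A.Nonempty) :
    ∑ l ∈ weightedPartitions A, (X : ℤ[X]) ^ (l.map Prod.snd).sum =
      ∑ C ∈ A.ssubsets, (∑ l ∈ weightedPartitions C, X ^ (l.map Prod.snd).sum) *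
        ∑ s ∈ Ico 1 #(A \ C), X ^ s := by
  rw [weightedPartitions, if_neg hA.ne_empty, sum_image, sum_sigma, ← sum_attach A.ssubsets]
  · refine sum_congr rfl fun C _ => ?_
    simp only [sum_product_right, sum_mul_sum, List.map_cons, List.sum_cons, pow_add]
    exact sum_congr rfl fun l _ => sum_congr rfl fun s _ => mul_comm _ _
  · rintro ⟨⟨C, hC⟩, s, l⟩ - ⟨⟨C', hC'⟩, s', l'⟩ - h
    simp only [List.cons.injEq, Prod.mk.injEq] at h
    obtain ⟨⟨hCC', rfl⟩, rfl⟩ := h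
    obtain rfl : C = C' := by
      rw [← Finset.sdiff_sdiff_eq_self (mem_ssubsets.1 hC).subset, hCC',
        Finset.sdiff_sdiff_eq_self (mem_ssubsets.1 hC').subset]
    rfl

end WeightedPartitions

section Equidistribution

open Polynomial

theorem sum_weightedPartitions_eq_derangementPoly {α : Type*} [Fintype α] [LinearOrder α]
    (A : Finset α) :
    ∑ l ∈ weightedPartitions A, (X : ℤ[X]) ^ (l.map Prod.snd).sum = derangementPoly A := by
  induction A using Finset.strongInduction with
  | H A ih =>
    rcases A.eq_empty_or_nonempty with rfl | hA
    · simp [derangementPoly_empty, weightedPartitions_empty]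
    · rw [sum_weightedPartitions_eq_sum_ssubsets hA, derangementPoly_eq_sum_ssubsets hA]
      exact sum_congr rfl fun C hC => by rw [ih C (mem_ssubsets.1 hC)]

lemma coeff_sum_X_pow {R ι : Type*} [Semiring R] (s : Finset ι) (f : ι → ℕ) (k : ℕ) :
    (∑ i ∈ s, (X : R[X]) ^ f i).coeff k = #{i ∈ s | f i = k} := by
  simp [coeff_X_pow, eq_comm]

theorem card_weightedPartitions_eq_card_derangements {α : Type*} [Fintype α] [LinearOrder α]
    (A : Finset α) (k : ℕ) :
    #{l ∈ weightedPartitions A | (l.map Prod.snd).sum = k} =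
      #{σ : Equiv.Perm α | σ.support = A ∧ #(excedances σ) = k} := by
  have h := congrArg (coeff · k) (sum_weightedPartitions_eq_derangementPoly A)
  simpa only [derangementPoly, coeff_sum_X_pow, Nat.cast_inj, filter_filter] using h

end Equidistribution

namespace DOSP

variable {n k : ℕ}

/-- The list of blocks and weights of a decorated ordered set partition. -/
def toList (P : DOSP n k) : List (Finset (Fin n) × ℕ) :=
  List.ofFn fun i => (P.S i, P.wt i)

lemma toList_injective : Function.Injective (toList (n := n) (k := k)) := by
  rintro ⟨len, _, S, wt, _, _, _, _, _, _⟩ ⟨len', _, S', wt', _, _, _, _, _, _⟩ h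
  obtain rfl : len = len' := by simpa [toList] using congrArg List.length h
  have hpair := List.ofFn_injective h
  obtain rfl : S = S' := funext fun i => congrArg Prod.fst (congrFun hpair i)
  obtain rfl : wt = wt' := funext fun i => congrArg Prod.snd (congrFun hpair i)
  rfl

lemma toList_mem_weightedPartitions (P : DOSP n k) : P.toList ∈ weightedPartitions univ := by
  refine mem_weightedPartitions.2 ⟨?_, ?_, fun x => ?_⟩
  · refine List.forall_mem_ofFn_iff.2 fun i => ⟨P.wt_lower i, ?_⟩
    exact (P.wt_upper i).trans_lt (Nat.sub_one_lt (P.blocks_nonempty i).card_ne_zero)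
  · exact List.pairwise_ofFn.2 fun i j hij => P.blocks_disjoint i j hij.ne
  · simpa [toList, List.mem_ofFn] using P.blocks_cover x

lemma sum_weights_toList (P : DOSP n k) : (P.toList.map Prod.snd).sum = k := by
  simpa only [toList, List.map_ofFn, List.sum_ofFn, Function.comp_apply] using P.wt_sum

lemma exists_toList_eq [NeZero n] {l : List (Finset (Fin n) × ℕ)}
    (hl : l ∈ weightedPartitions univ) (hk : (l.map Prod.snd).sum = k) :
    ∃ P : DOSP n k, P.toList = l := by
  obtain ⟨hweight, hdisj, hcover⟩ := mem_weightedPartitions.1 hl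
  have hweight_get (i : Fin l.length) := hweight (l.get i) (l.get_mem i)
  have hdisj_get := List.pairwise_iff_get.1 hdisj
  have hcover_get (x : Fin n) : ∃ i, x ∈ (l.get i).1 := by
    obtain ⟨p, hp, hx⟩ := (hcover x).1 (mem_univ x)
    obtain ⟨i, rfl⟩ := List.mem_iff_get.1 hp
    exact ⟨i, hx⟩
  refine ⟨{
    len := l.length
    len_pos := (hcover_get 0).elim fun i _ => i.pos
    S := fun i => (l.get i).1
    wt := fun i => (l.get i).2
    blocks_nonempty := fun i => card_pos.1 (Nat.zero_lt_of_lt (hweight_get i).2)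
    blocks_disjoint := fun i j hij =>
      hij.lt_or_gt.elim (hdisj_get i j) fun h => (hdisj_get j i h).symm
    blocks_cover := hcover_get
    wt_lower := fun i => (hweight_get i).1
    wt_upper := fun i => Nat.le_sub_one_of_lt (hweight_get i).2
    wt_sum := ?_ }, List.ofFn_get l⟩
  rw [← hk, ← List.sum_ofFn, ← Function.comp_def Prod.snd l.get, ← List.map_ofFn, List.ofFn_get]

theorem card_eq_card_weightedPartitions [NeZero n] :
    Nat.card (DOSP n k) =
      #{l ∈ weightedPartitions (univ : Finset (Fin n)) | (l.map Prod.snd).sum = k} := by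
  rw [← Nat.card_eq_finsetCard]
  refine Nat.card_eq_of_bijective (fun P => ⟨P.toList,
    mem_filter.2 ⟨P.toList_mem_weightedPartitions, P.sum_weights_toList⟩⟩) ⟨?_, ?_⟩
  · exact fun P Q h => toList_injective (congrArg Subtype.val h)
  · rintro ⟨l, hl⟩
    obtain ⟨P, rfl⟩ := exists_toList_eq (mem_filter.1 hl).1 (mem_filter.1 hl).2
    exact ⟨P, rfl⟩

end DOSP

/-- the number of decorated ordered set partitions of type `Δ_{k,n}`
equals the number of fixed-point-free permutations of `{1,…,n}` with exactly `k`
ascents (positions with `σ(i) > i`). -/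
theorem stmt8 {n k : ℕ} (hn : 2 ≤ n) (hk1 : 1 ≤ k) (hk2 : k ≤ n - 1) :
    Nat.card (DOSP n k) =
      Nat.card {σ : Equiv.Perm (Fin n) //
        (∀ i, σ i ≠ i) ∧ (univ.filter fun i => i < σ i).card = k} := by
  have : NeZero n := ⟨by omega⟩
  have hsupport (σ : Equiv.Perm (Fin n)) : σ.support = univ ↔ ∀ i, σ i ≠ i := by
    simp only [eq_univ_iff_forall, Equiv.Perm.mem_support]
  rw [DOSP.card_eq_card_weightedPartitions, card_weightedPartitions_eq_card_derangements,
    Nat.card_eq_fintype_card, Fintype.card_subtype]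
  simp only [hsupport, excedances]
end

section
/- Let n ≥ 2 and 1 ≤ k ≤ n−1. The number of decorated ordered set partitions ((S_1,…,S_ℓ),(s_1,…,s_ℓ)) of type Δ_{k,n} with 1 ∈ S_1 equals the Eulerian number A_{k−1,n−1}, i.e. the number of permutations σ of {1,…,n−1} having exactly k−1 descents, where a descent of σ is an index i ∈ {1,…,n−2} with σ(i) > σ(i+1). -/
open Finset

/-!
Let `A_m` be the Eulerian polynomials (descent generating functions of the permutations of
`Fin m`), and let `b_m = X + ⋯ + X ^ (m - 1)` be the generating polynomial of the weights allowed on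
a block of size `m`. Write `A(x)` and `B(x)` for the exponential generating functions of `A` and
`b`. Sorting permutations by their first value and taking differences in that value gives
`e^{(X - 1) x} A(x) = X A(x) + 1 - X`, and geometric sums give
`(X - 1) (1 - B(x)) = X e^x - e^{X x}`. Together they say that `X (A(x) - 1) = B'(x) / (1 - B(x))`,
and the right-hand side enumerates sequences of weighted blocks: `B'` accounts for the block
containing the distinguished element, each further factor `B` for one more block.
-/

section Permutations

variable {m : ℕ}

/-- The number of descents of a permutation, that is of indices `i` with `σ (i + 1) < σ i`. The
successor is quantified over because `i + 1` would wrap around in `Fin m`. -/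
def descentCount (σ : Equiv.Perm (Fin m)) : ℕ :=
  #{i : Fin m | ∃ j : Fin m, (j : ℕ) = (i : ℕ) + 1 ∧ σ j < σ i}

/-- The permutation of `Fin (m + 1)` with first value `r` whose remaining values are in the same
relative order as those of `τ`. -/
def consPerm (r : Fin (m + 1)) (τ : Equiv.Perm (Fin m)) : Equiv.Perm (Fin (m + 1)) :=
  r.cycleRange.symm * Equiv.Perm.decomposeFin.symm (0, τ)

theorem consPerm_zero (r : Fin (m + 1)) (τ : Equiv.Perm (Fin m)) : consPerm r τ 0 = r := by
  simp [consPerm]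

theorem consPerm_succ (r : Fin (m + 1)) (τ : Equiv.Perm (Fin m)) (i : Fin m) :
    consPerm r τ i.succ = r.succAbove (τ i) := by
  simp [consPerm]

theorem consPerm_bijective (m : ℕ) :
    Function.Bijective fun p : Fin (m + 1) × Equiv.Perm (Fin m) ↦ consPerm p.1 p.2 := by
  rw [Fintype.bijective_iff_injective_and_card]
  constructor
  · rintro ⟨r, τ⟩ ⟨r', τ'⟩ h
    obtain rfl : r = r' := by simpa only [consPerm_zero] using DFunLike.congr_fun h 0
    obtain rfl : τ = τ' := Equiv.ext fun i ↦ by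
      simpa only [consPerm_succ, Fin.succAbove_right_inj] using DFunLike.congr_fun h i.succ
    rfl
  · simp [Fintype.card_perm, Nat.factorial_succ]

theorem sum_perm_fin_succ {M : Type*} [AddCommMonoid M] (F : Equiv.Perm (Fin (m + 1)) → M) :
    ∑ σ, F σ = ∑ r, ∑ τ, F (consPerm r τ) := by
  rw [← (consPerm_bijective m).sum_comp, Fintype.sum_prod_type]

theorem descentCount_consPerm (r : Fin (m + 2)) (σ : Equiv.Perm (Fin (m + 1))) :
    descentCount (consPerm r σ) =
      (if (σ 0).castSucc < r then 1 else 0) + descentCount σ := by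
  have descent_zero : (∃ j : Fin (m + 2), (j : ℕ) = ((0 : Fin (m + 2)) : ℕ) + 1 ∧
      consPerm r σ j < consPerm r σ 0) ↔ (σ 0).castSucc < r := by
    simp [Fin.exists_fin_succ, consPerm_zero, consPerm_succ, Fin.succAbove_lt_iff_castSucc_lt]
  have descent_succ (i : Fin (m + 1)) : (∃ j : Fin (m + 2), (j : ℕ) = (i.succ : ℕ) + 1 ∧
      consPerm r σ j < consPerm r σ i.succ) ↔
        ∃ j : Fin (m + 1), (j : ℕ) = (i : ℕ) + 1 ∧ σ j < σ i := by
    rw [Fin.exists_fin_succ]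
    simp [consPerm_succ]
  rw [descentCount, Fin.card_filter_univ_succ]
  simp only [descent_zero, descent_succ, descentCount]
  split_ifs <;> omega

theorem descentCount_consPerm_zero (τ : Equiv.Perm (Fin m)) :
    descentCount (consPerm 0 τ) = descentCount τ := by
  cases m with
  | zero => simp [descentCount]
  | succ m => simp [descentCount_consPerm]

end Permutations

section Eulerian

open Polynomial

/-- The Eulerian polynomial: the descent generating function of the permutations of `Fin m`. -/
noncomputable def eulerianPoly (R : Type*) [Semiring R] (m : ℕ) : R[X] :=
  ∑ σ : Equiv.Perm (Fin m), X ^ descentCount σ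

/-- The refined Eulerian polynomial: the descent generating function of the permutations of
`Fin (m + 1)` with first value `r`. -/
noncomputable def refinedEulerianPoly (R : Type*) [Semiring R] {m : ℕ} (r : Fin (m + 1)) : R[X] :=
  ∑ τ : Equiv.Perm (Fin m), X ^ descentCount (consPerm r τ)

section Semiring

variable (R : Type*) [Semiring R]

theorem coeff_eulerianPoly (m j : ℕ) :
    (eulerianPoly R m).coeff j = Nat.card {σ : Equiv.Perm (Fin m) // descentCount σ = j} := by
  rw [eulerianPoly, finsetSum_coeff, Nat.card_eq_fintype_card, Fintype.card_subtype, card_filter,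
    Nat.cast_sum]
  simp only [coeff_X_pow, Nat.cast_ite, Nat.cast_one, Nat.cast_zero, eq_comm]

theorem eulerianPoly_zero : eulerianPoly R 0 = 1 := by
  simp [eulerianPoly, descentCount]

theorem eulerianPoly_succ (m : ℕ) :
    eulerianPoly R (m + 1) = ∑ r : Fin (m + 1), refinedEulerianPoly R r :=
  sum_perm_fin_succ _

theorem refinedEulerianPoly_zero (m : ℕ) :
    refinedEulerianPoly R (0 : Fin (m + 1)) = eulerianPoly R m := by
  simp only [refinedEulerianPoly, descentCount_consPerm_zero, eulerianPoly]

theorem refinedEulerianPoly_eq_sum {m : ℕ} (r : Fin (m + 2)) :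
    refinedEulerianPoly R r =
      ∑ s : Fin (m + 1), (if s.castSucc < r then X else 1) * refinedEulerianPoly R s := by
  rw [refinedEulerianPoly, sum_perm_fin_succ]
  refine sum_congr rfl fun s _ ↦ ?_
  rw [refinedEulerianPoly, mul_sum]
  refine sum_congr rfl fun τ _ ↦ ?_
  rw [descentCount_consPerm, consPerm_zero, pow_add]
  split_ifs <;> simp

theorem refinedEulerianPoly_last (m : ℕ) :
    refinedEulerianPoly R (Fin.last (m + 1)) = X * eulerianPoly R (m + 1) := by
  simp only [refinedEulerianPoly_eq_sum, Fin.castSucc_lt_last, if_true, eulerianPoly_succ, mul_sum]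

end Semiring

theorem refinedEulerianPoly_succ (R : Type*) [Ring R] {m : ℕ} (r : Fin (m + 1)) :
    refinedEulerianPoly R r.succ =
      refinedEulerianPoly R r.castSucc + (X - 1) * refinedEulerianPoly R r := by
  have weight_succ (s : Fin (m + 1)) : (if s.castSucc < r.succ then X else 1 : R[X]) =
      (if s.castSucc < r.castSucc then X else 1) + if s = r then X - 1 else 0 := by
    rcases lt_trichotomy s r with h | rfl | h
    · simp [h, h.le, h.ne]
    · simp
    · simp [h.not_ge, h.not_gt, h.ne']
  rw [refinedEulerianPoly_eq_sum R r.succ, refinedEulerianPoly_eq_sum R r.castSucc]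
  simp only [weight_succ, add_mul, sum_add_distrib, ite_mul, zero_mul,
    sum_ite_eq', mem_univ, if_true]

variable (R : Type*) [CommRing R]

/-- Newton's forward difference formula for the dependence on the first value. -/
theorem refinedEulerianPoly_eq_sum_antidiagonal {m q r : ℕ} (h : m = q + r) :
    refinedEulerianPoly R (⟨r, by omega⟩ : Fin (m + 1)) =
      ∑ ij ∈ antidiagonal r,
        (r.choose ij.1 : R[X]) * ((X - 1) ^ ij.1 * eulerianPoly R (q + ij.2)) := by
  induction r generalizing m q with
  | zero =>
    obtain rfl : m = q := h
    simpa using refinedEulerianPoly_zero R m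
  | succ r ih =>
    obtain ⟨m, rfl⟩ : ∃ p, m = p + 1 := ⟨q + r, by omega⟩
    have difference := refinedEulerianPoly_succ R (⟨r, by omega⟩ : Fin (m + 1))
    simp only [Fin.succ_mk, Fin.castSucc_mk] at difference
    rw [difference, ih (show m + 1 = q + 1 + r by omega), ih (show m = q + r by omega),
      sum_antidiagonal_choose_succ_mul fun i j ↦ (X - 1) ^ i * eulerianPoly R (q + j), mul_sum]
    refine congrArg₂ (· + ·) (sum_congr rfl fun ij _ ↦ ?_) (sum_congr rfl fun ij hij ↦ ?_)
    · rw [add_right_comm, add_assoc]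
    · rw [Nat.choose_symm_of_eq_add (HasAntidiagonal.mem_antidiagonal.mp hij).symm]
      ring

theorem sum_antidiagonal_choose_mul_eulerianPoly (m : ℕ) :
    ∑ ij ∈ antidiagonal (m + 1),
        ((m + 1).choose ij.1 : R[X]) * ((X - 1) ^ ij.1 * eulerianPoly R ij.2) =
      X * eulerianPoly R (m + 1) := by
  have h := refinedEulerianPoly_eq_sum_antidiagonal R (zero_add (m + 1)).symm
  simp only [zero_add] at h
  rw [← h, ← refinedEulerianPoly_last]
  rfl

end Eulerian

section Blocks

open Polynomial

/-- The generating polynomial of the weights `1 ≤ s ≤ m - 1` allowed on a block of size `m`. -/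
noncomputable def blockPoly (R : Type*) [Semiring R] (m : ℕ) : R[X] :=
  ∑ j ∈ Ico 1 m, X ^ j

theorem blockPoly_zero (R : Type*) [Semiring R] : blockPoly R 0 = 0 := by
  simp [blockPoly]

theorem X_sub_one_mul_blockPoly_succ (R : Type*) [CommRing R] (m : ℕ) :
    (X - 1) * blockPoly R (m + 1) = X ^ (m + 1) - X := by
  rw [blockPoly, mul_comm, geom_sum_Ico_mul _ (by omega), pow_one]

end Blocks

section ExponentialGeneratingFunctions

open PowerSeries
open scoped Nat

theorem derivation_prod {R A M ι : Type*} [CommSemiring R] [CommSemiring A] [AddCommMonoid M]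
    [Algebra R A] [Module A M] [Module R M] [DecidableEq ι] (D : Derivation R A M) (s : Finset ι)
    (f : ι → A) : D (∏ i ∈ s, f i) = ∑ i ∈ s, (∏ j ∈ s.erase i, f j) • D (f i) := by
  induction s using Finset.induction_on with
  | empty => simp
  | insert a s ha ih =>
    rw [prod_insert ha, sum_insert ha, erase_insert ha, D.leibniz, ih, add_comm, smul_sum]
    congr 1
    refine sum_congr rfl fun i hi ↦ ?_
    have hai : a ≠ i := fun h ↦ ha (h ▸ hi)
    rw [erase_insert_of_ne hai, prod_insert fun h ↦ ha (mem_of_mem_erase h), smul_smul]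

theorem coeff_eq_sum_of_one_sub_mul_eq {R : Type*} [CommRing R] {B F G : R⟦X⟧}
    (hB : constantCoeff B = 0) (h : (1 - B) * F = G) (n : ℕ) :
    coeff n F = ∑ l ∈ range (n + 1), coeff n (G * B ^ l) := by
  have truncation : F = G * ∑ l ∈ range (n + 1), B ^ l + F * B ^ (n + 1) := by
    rw [← h]
    linear_combination -F * mul_neg_geom_sum B (n + 1)
  have remainder : coeff n (F * B ^ (n + 1)) = 0 :=
    X_pow_dvd_iff.mp ((pow_dvd_pow_of_dvd (X_dvd_iff.mpr hB) (n + 1)).mul_left F) n n.lt_succ_self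
  rw [← map_sum, ← mul_sum]
  conv_lhs => rw [truncation, map_add, remainder, add_zero]

variable {R : Type*} [CommRing R] [Algebra ℚ R]

/-- The exponential generating function of a sequence. -/
noncomputable def egf : (ℕ → R) →ₗ[R] R⟦X⟧ where
  toFun b := PowerSeries.mk fun n ↦ (n ! : ℚ)⁻¹ • b n
  map_add' b c := by ext; simp
  map_smul' a b := by ext; simp

theorem coeff_egf (b : ℕ → R) (n : ℕ) : coeff n (egf b) = (n ! : ℚ)⁻¹ • b n :=
  PowerSeries.coeff_mk n fun n ↦ (n ! : ℚ)⁻¹ • b n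

theorem factorial_mul_coeff_egf (b : ℕ → R) (n : ℕ) : n ! * coeff n (egf b) = b n := by
  rw [coeff_egf, ← nsmul_eq_mul, ← Nat.cast_smul_eq_nsmul ℚ,
    smul_inv_smul₀ (mod_cast n.factorial_ne_zero)]

theorem egf_single_zero : egf (Pi.single 0 1 : ℕ → R) = 1 := by
  ext n
  rcases n with _ | n <;> simp [coeff_egf, coeff_one]

theorem egf_one : egf (1 : ℕ → R) = exp R := by
  ext n
  simp [coeff_egf, coeff_exp, Algebra.smul_def]

theorem C_mul_egf (a : R) (b : ℕ → R) : C a * egf b = egf (a • b) := by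
  rw [map_smul, smul_eq_C_mul]

theorem egf_pow (a : R) : egf (fun n ↦ a ^ n) = rescale a (exp R) := by
  ext n
  simp [coeff_egf, coeff_rescale, coeff_exp, Algebra.smul_def, mul_comm]

theorem egf_mul (b c : ℕ → R) :
    egf b * egf c = egf fun n ↦ ∑ ij ∈ antidiagonal n, (n.choose ij.1 : R) * (b ij.1 * c ij.2) := by
  ext n
  simp only [coeff_mul, coeff_egf, smul_sum]
  refine sum_congr rfl fun ij hij ↦ ?_
  rw [HasAntidiagonal.mem_antidiagonal] at hij
  subst hij
  rw [← nsmul_eq_mul, ← Nat.cast_smul_eq_nsmul ℚ, smul_mul_smul_comm, smul_smul,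
    Nat.cast_add_choose]
  congr 1
  field_simp

theorem derivative_egf (b : ℕ → R) : d⁄dX R (egf b) = egf fun n ↦ b (n + 1) := by
  ext n
  have : ((n : R) + 1) = algebraMap ℚ R (n + 1) := by simp
  rw [coeff_derivative, coeff_egf, coeff_egf, this, mul_comm, ← Algebra.smul_def, smul_smul,
    Nat.factorial_succ]
  congr 1
  push_cast
  field_simp

theorem sum_prod_card_fiber {ι : Type*} [Fintype ι] [DecidableEq ι] (n : ℕ) (b : ι → ℕ → R) :
    ∑ f : Fin n → ι, ∏ i, b i #{x | f x = i} = n ! * coeff n (∏ i, egf (b i)) := by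
  induction n generalizing b with
  | zero => simp [map_prod, ← coeff_zero_eq_constantCoeff_apply, coeff_egf]
  | succ n ih =>
    have coeff_succ : ((n + 1)! : R) * coeff (n + 1) (∏ i, egf (b i)) =
        n ! * coeff n (d⁄dX R (∏ i, egf (b i))) := by
      rw [coeff_derivative, Nat.factorial_succ]
      push_cast
      ring
    -- Differentiating the `i`-th factor accounts for the functions with first value `i`.
    have derivative_factor (i : ι) : (∏ j ∈ univ.erase i, egf (b j)) • d⁄dX R (egf (b i)) =
        ∏ j, egf (Function.update b i (fun k ↦ b i (k + 1)) j) := by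
      rw [← mul_prod_erase _ _ (mem_univ i), smul_eq_mul, mul_comm, derivative_egf,
        Function.update_self]
      congr 1
      refine prod_congr rfl fun j hj ↦ ?_
      rw [Function.update_of_ne (ne_of_mem_erase hj)]
    rw [coeff_succ, derivation_prod, map_sum, mul_sum,
      ← (Fin.consEquiv fun _ : Fin (n + 1) ↦ ι).sum_comp, Fintype.sum_prod_type]
    refine sum_congr rfl fun i _ ↦ ?_
    rw [derivative_factor, ← ih]
    refine sum_congr rfl fun f _ ↦ prod_congr rfl fun j _ ↦ ?_
    rw [Fin.card_filter_univ_succ]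
    rcases eq_or_ne i j with rfl | hij
    · simp
    · simp [hij, hij.symm]

theorem sum_prod_card_fiber_cons_zero (N l : ℕ) (b : ℕ → R) :
    ∑ g : Fin N → Fin (l + 1),
        ∏ i, b #{x | (Fin.cons 0 g : Fin (N + 1) → Fin (l + 1)) x = i} =
      N ! * coeff N (d⁄dX R (egf b) * egf b ^ l) := by
  have h := sum_prod_card_fiber N
    (Fin.cons (fun n ↦ b (n + 1)) fun _ ↦ b : Fin (l + 1) → ℕ → R)
  simp only [Fin.prod_univ_succ, Fin.cons_zero, Fin.cons_succ, prod_const, card_univ,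
    Fintype.card_fin] at h
  rw [derivative_egf, ← h]
  refine sum_congr rfl fun g _ ↦ ?_
  simp [Fin.prod_univ_succ, Fin.card_filter_univ_succ, (Fin.succ_ne_zero _).symm]

end ExponentialGeneratingFunctions

section EulerianGeneratingFunction

open Polynomial
open scoped PowerSeries Nat

variable (R : Type*) [CommRing R] [Algebra ℚ R]

-- Scalars are written `PowerSeries.C a * _`: in `a • _` the polynomial `X : R[X]` could also act on
-- `R[X]⟦X⟧` as the power series variable.
theorem rescale_exp_mul_egf_eulerianPoly :
    PowerSeries.rescale (X - 1) (PowerSeries.exp R[X]) * egf (eulerianPoly R) =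
      PowerSeries.C X * egf (eulerianPoly R) + PowerSeries.C (1 - X) := by
  rw [← egf_pow, egf_mul, ← mul_one (PowerSeries.C (1 - X)), ← egf_single_zero, C_mul_egf,
    C_mul_egf, ← map_add]
  congr 1
  funext m
  cases m with
  | zero => simp [eulerianPoly_zero]
  | succ m => simp [sum_antidiagonal_choose_mul_eulerianPoly]

theorem C_X_sub_one_mul_one_sub_egf_blockPoly :
    PowerSeries.C (X - 1) * (1 - egf (blockPoly R)) =
      PowerSeries.C X * PowerSeries.exp R[X] - PowerSeries.rescale X (PowerSeries.exp R[X]) := by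
  rw [← egf_pow, ← egf_one, ← egf_single_zero, ← map_sub, C_mul_egf, C_mul_egf, ← map_sub]
  congr 1
  funext m
  cases m with
  | zero => simp [blockPoly_zero]
  | succ m => simp [X_sub_one_mul_blockPoly_succ]

theorem C_X_sub_one_mul_derivative_egf_blockPoly :
    PowerSeries.C (X - 1) * d⁄dX R[X] (egf (blockPoly R)) =
      PowerSeries.C X *
        (PowerSeries.rescale X (PowerSeries.exp R[X]) - PowerSeries.exp R[X]) := by
  rw [derivative_egf, ← egf_pow, ← egf_one, ← map_sub, C_mul_egf, C_mul_egf]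
  congr 1
  funext m
  simp only [Pi.smul_apply, Pi.sub_apply, Pi.one_apply, smul_eq_mul, X_sub_one_mul_blockPoly_succ]
  ring

theorem one_sub_egf_blockPoly_mul :
    (1 - egf (blockPoly R)) * (PowerSeries.C X * (egf (eulerianPoly R) - 1)) =
      d⁄dX R[X] (egf (blockPoly R)) := by
  have cancel : IsLeftRegular (PowerSeries.C (X - 1 : R[X])) := fun P Q h ↦ by
    ext1 n
    refine (monic_X_sub_C (1 : R)).isRegular.left ?_
    simpa only [PowerSeries.coeff_C_mul, map_one] using congrArg (PowerSeries.coeff n) h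
  have exp_mul : PowerSeries.exp R[X] * PowerSeries.rescale (X - 1) (PowerSeries.exp R[X]) =
      PowerSeries.rescale X (PowerSeries.exp R[X]) := by
    have h := PowerSeries.exp_mul_exp_eq_exp_add (1 : R[X]) (X - 1)
    rwa [PowerSeries.rescale_one, RingHom.id_apply, add_sub_cancel] at h
  apply cancel
  have eulerian := rescale_exp_mul_egf_eulerianPoly R
  beta_reduce
  rw [← mul_assoc, C_X_sub_one_mul_one_sub_egf_blockPoly,
    C_X_sub_one_mul_derivative_egf_blockPoly, ← exp_mul]
  simp only [map_sub, map_one] at eulerian ⊢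
  linear_combination -(PowerSeries.C X * PowerSeries.exp R[X]) * eulerian

theorem X_mul_eulerianPoly_eq_sum {N : ℕ} (hN : N ≠ 0) :
    X * eulerianPoly R N =
      ∑ l ∈ range (N + 1), ∑ g : Fin N → Fin (l + 1),
        ∏ i, blockPoly R #{x | (Fin.cons 0 g : Fin (N + 1) → Fin (l + 1)) x = i} := by
  have constantCoeff_block : PowerSeries.constantCoeff (egf (blockPoly R)) = 0 := by
    rw [← PowerSeries.coeff_zero_eq_constantCoeff_apply, coeff_egf, blockPoly_zero, smul_zero]
  simp only [sum_prod_card_fiber_cons_zero]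
  rw [← mul_sum, ← coeff_eq_sum_of_one_sub_mul_eq constantCoeff_block (one_sub_egf_blockPoly_mul R),
    PowerSeries.coeff_C_mul, map_sub, PowerSeries.coeff_one, if_neg hN, sub_zero, mul_left_comm,
    factorial_mul_coeff_egf]

end EulerianGeneratingFunction

section DecoratedOrderedSetPartitions

variable {n l N k : ℕ}

/-- The weights of total `k` that turn the ordered set partition whose `i`-th block is the fibre of
`f` over `i` into a decorated one. -/
def admissibleWeights (f : Fin n → Fin l) (k : ℕ) : Finset (Fin l → ℕ) :=
  {w ∈ Fintype.piFinset fun i ↦ Ico 1 #{x | f x = i} | ∑ i, w i = k}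

theorem mem_admissibleWeights {f : Fin n → Fin l} {w : Fin l → ℕ} :
    w ∈ admissibleWeights f k ↔
      (∀ i, 1 ≤ w i ∧ w i < #{x | f x = i}) ∧ ∑ i, w i = k := by
  simp [admissibleWeights]

theorem coeff_prod_blockPoly (R : Type*) [CommSemiring R] (f : Fin n → Fin l) (k : ℕ) :
    (∏ i, blockPoly R #{x | f x = i}).coeff k = #(admissibleWeights f k) := by
  simp only [blockPoly]
  rw [prod_univ_sum, Polynomial.finsetSum_coeff, admissibleWeights, card_filter, Nat.cast_sum]
  refine sum_congr rfl fun w _ ↦ ?_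
  rw [prod_pow_eq_pow_sum, Polynomial.coeff_X_pow]
  simp only [Nat.cast_ite, Nat.cast_one, Nat.cast_zero, eq_comm]

theorem DOSP.exists_fiber_eq (D : DOSP n k) :
    ∃ f : Fin n → Fin D.len, ∀ i, ({x | f x = i} : Finset (Fin n)) = D.S i := by
  choose f hf using D.blocks_cover
  refine ⟨f, fun i ↦ ?_⟩
  ext x
  rw [mem_filter_univ]
  refine ⟨fun h ↦ h ▸ hf x, fun hx ↦ ?_⟩
  by_contra hne
  exact disjoint_left.mp (D.blocks_disjoint _ _ hne) (hf x) hx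

theorem DOSP.len_le (D : DOSP n k) : D.len ≤ n := by
  obtain ⟨f, hf⟩ := D.exists_fiber_eq
  have surjective : Function.Surjective f := fun i ↦ by
    obtain ⟨x, hx⟩ := D.blocks_nonempty i
    exact ⟨x, by simpa [← hf] using hx⟩
  simpa using Fintype.card_le_of_surjective f surjective

/-- Codes of decorated ordered set partitions of `Fin (N + 1)` with `0` in the first block: the
number of blocks minus one, the block index of each nonzero element, and the weights. -/
abbrev DOSPCode (N k : ℕ) : Type :=
  Σ l : Fin (N + 1), Σ g : Fin N → Fin (l + 1),
    admissibleWeights (Fin.cons 0 g : Fin (N + 1) → Fin (l + 1)) k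

/-- The decorated ordered set partition with a given code. -/
def DOSPCode.toDOSP (c : DOSPCode N k) : DOSP (N + 1) k where
  len := c.1 + 1
  len_pos := Nat.succ_pos _
  S i := {x : Fin (N + 1) | (Fin.cons 0 c.2.1 : Fin (N + 1) → Fin (c.1 + 1)) x = i}
  wt := c.2.2
  blocks_nonempty i := card_pos.mp (Nat.zero_lt_of_lt ((mem_admissibleWeights.mp c.2.2.2).1 i).2)
  blocks_disjoint _ _ hij := disjoint_filter.mpr fun _ _ hi hj ↦ hij (hi.symm.trans hj)
  blocks_cover x := ⟨_, mem_filter_univ x |>.mpr rfl⟩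
  wt_lower i := ((mem_admissibleWeights.mp c.2.2.2).1 i).1
  wt_upper i := Nat.le_sub_one_of_lt ((mem_admissibleWeights.mp c.2.2.2).1 i).2
  wt_sum := (mem_admissibleWeights.mp c.2.2.2).2

theorem DOSPCode.zero_mem_toDOSP (c : DOSPCode N k) :
    0 ∈ c.toDOSP.S ⟨0, c.toDOSP.len_pos⟩ := by
  simp only [DOSPCode.toDOSP, mem_filter_univ]
  rfl

theorem DOSPCode.toDOSP_injective :
    Function.Injective (DOSPCode.toDOSP : DOSPCode N k → DOSP (N + 1) k) := by
  rintro ⟨⟨l, hl⟩, g, w, hw⟩ ⟨⟨l', hl'⟩, g', w', hw'⟩ h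
  simp only [DOSPCode.toDOSP, DOSP.mk.injEq] at h
  obtain ⟨hlen, hS, hwt⟩ := h
  obtain rfl : l = l' := by omega
  obtain rfl : g = g' := by
    funext x
    have hx := congrArg (x.succ ∈ ·) (congrFun (eq_of_heq hS) (g x))
    simpa [eq_comm] using hx
  obtain rfl : w = w' := eq_of_heq hwt
  rfl

theorem DOSPCode.exists_toDOSP_eq (D : DOSP (N + 1) k) (hD : 0 ∈ D.S ⟨0, D.len_pos⟩) :
    ∃ c : DOSPCode N k, c.toDOSP = D := by
  obtain ⟨f, hf⟩ := D.exists_fiber_eq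
  have len_le := D.len_le
  obtain ⟨len, len_pos, S, wt, nonempty, _, _, lower, upper, sum_eq⟩ := D
  dsimp only at f hf hD len_le
  obtain ⟨l, rfl⟩ : ∃ l, len = l + 1 := ⟨len - 1, by omega⟩
  obtain rfl : (fun i ↦ ({x | f x = i} : Finset (Fin (N + 1)))) = S := funext hf
  obtain ⟨g, rfl⟩ : ∃ g, f = Fin.cons 0 g := by
    have f_zero : f 0 = 0 := (mem_filter.mp hD).2
    exact ⟨Fin.tail f, by rw [← f_zero, Fin.cons_self_tail]⟩
  have weights_mem : wt ∈ admissibleWeights (Fin.cons 0 g) k := mem_admissibleWeights.mpr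
    ⟨fun i ↦ ⟨lower i, Nat.lt_of_le_sub_one (card_pos.mpr (nonempty i)) (upper i)⟩, sum_eq⟩
  exact ⟨⟨⟨l, len_le⟩, g, wt, weights_mem⟩, rfl⟩

theorem card_dosp_zero_mem (N k : ℕ) :
    Nat.card {D : DOSP (N + 1) k // 0 ∈ D.S ⟨0, D.len_pos⟩} =
      ∑ l ∈ range (N + 1), ∑ g : Fin N → Fin (l + 1),
        #(admissibleWeights (Fin.cons 0 g : Fin (N + 1) → Fin (l + 1)) k) := by
  have bijective : Function.Bijective fun c : DOSPCode N k ↦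
      (⟨c.toDOSP, c.zero_mem_toDOSP⟩ : {D : DOSP (N + 1) k // 0 ∈ D.S ⟨0, D.len_pos⟩}) := by
    refine ⟨fun c c' h ↦ DOSPCode.toDOSP_injective (Subtype.ext_iff.mp h), fun ⟨D, hD⟩ ↦ ?_⟩
    obtain ⟨c, rfl⟩ := DOSPCode.exists_toDOSP_eq D hD
    exact ⟨c, rfl⟩
  rw [← Nat.card_eq_of_bijective _ bijective, Nat.card_eq_fintype_card]
  simp only [Fintype.card_sigma, Fintype.card_coe]
  exact Fin.sum_univ_eq_sum_range (fun l ↦ ∑ g : Fin N → Fin (l + 1),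
    #(admissibleWeights (Fin.cons 0 g : Fin (N + 1) → Fin (l + 1)) k)) (N + 1)

end DecoratedOrderedSetPartitions

/-- the number of decorated ordered set partitions of type `Δ_{k,n}`
whose first block contains the element `1` equals the Eulerian number
`A_{k−1,n−1}`, the number of permutations of `{1,…,n−1}` with exactly `k−1`
descents (indices `i` with `σ(i) > σ(i+1)`). -/
theorem stmt9 {n k : ℕ} (hn : 2 ≤ n) (hk1 : 1 ≤ k) (hk2 : k ≤ n - 1) :
    Nat.card {D : DOSP n k // (⟨0, by omega⟩ : Fin n) ∈ D.S ⟨0, D.len_pos⟩} =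
      Nat.card {σ : Equiv.Perm (Fin (n - 1)) //
        (univ.filter fun i : Fin (n - 1) =>
          ∃ j : Fin (n - 1), (j : ℕ) = (i : ℕ) + 1 ∧ σ j < σ i).card = k - 1} := by
  obtain ⟨N, rfl⟩ : ∃ N, n = N + 1 := ⟨n - 1, by omega⟩
  obtain ⟨j, rfl⟩ : ∃ j, k = j + 1 := ⟨k - 1, by omega⟩
  have coeff_eq := congrArg (Polynomial.coeff · (j + 1))
    (X_mul_eulerianPoly_eq_sum ℚ (N := N) (by omega))
  simp only [Polynomial.coeff_X_mul, Polynomial.finsetSum_coeff, coeff_eulerianPoly,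
    coeff_prod_blockPoly] at coeff_eq
  refine (card_dosp_zero_mem N (j + 1)).trans (Eq.symm ?_)
  exact_mod_cast coeff_eq
end

section
/- Let 2 ≤ k and n ≥ k+2, let c assign a real number c_J to every k-element subset J of {1,…,n}, and let L = {ℓ_1 < ⋯ < ℓ_{k−2}} be any (k−2)-element subset of {1,…,n}. Then in 𝔅^{(L)}: (∂_{ℓ_1} ∘ ⋯ ∘ ∂_{ℓ_{k−2}})(Σ_J c_J 𝓛_J) = Σ_{\{i,j\}} ω^{(L)}_{ij} β^{(L)}_{ij}, where the sum on the right is over all 2-element subsets {i,j} of S = {1,…,n}∖L whose two elements are not cyclically adjacent in S, and ω^{(L)}_{ij} = −(c_{L∪{i,j}} − c_{L∪{i,j⁺}} − c_{L∪{i⁺,j}} + c_{L∪{i⁺,j⁺}}) with i⁺, j⁺ the cyclic successors of i, j in S. -/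
open Finset

/-- Cyclic successor in `Fin n`. -/
def csucc {n : ℕ} (x : Fin n) : Fin n :=
  ⟨(x.val + 1) % n, Nat.mod_lt _ (Nat.lt_of_le_of_lt (Nat.zero_le _) x.isLt)⟩

/-- Cyclic predecessor in `Fin n`. -/
def cpred {n : ℕ} (x : Fin n) : Fin n :=
  ⟨(x.val + (n - 1)) % n, Nat.mod_lt _ (Nat.lt_of_le_of_lt (Nat.zero_le _) x.isLt)⟩

/-- The cyclic interval `[i, j]` in `Fin n`. -/
def cInterval {n : ℕ} (i j : Fin n) : Finset (Fin n) :=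
  univ.filter fun x => (x - i).val ≤ (j - i).val

/-- `K` is frozen in `S` if its elements are consecutive in the cyclic order induced
on `S` from `(1,2,…,n)`, i.e. `K` is the intersection of `S` with a cyclic interval. -/
def FrozenIn {n : ℕ} (S K : Finset (Fin n)) : Prop :=
  ∃ i j : Fin n, K = S ∩ cInterval i j

instance {n : ℕ} (S K : Finset (Fin n)) : Decidable (FrozenIn S K) :=
  inferInstanceAs (Decidable (∃ i j : Fin n, K = S ∩ cInterval i j))

/-- The first element of `K` met when reading `j, j+1, j+2, …` cyclically
(`j` itself if `j ∈ K`); junk value `j` if `K = ∅`. -/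
def nextIn {n : ℕ} (K : Finset (Fin n)) (j : Fin n) : Fin n :=
  if h : (univ.filter fun r : Fin n => j + r ∈ K).Nonempty then
    j + (univ.filter fun r : Fin n => j + r ∈ K).min' h
  else j

/-- The cyclic predecessor of `x` in `S`: the first element of `S` met when reading
`x−1, x−2, …` cyclically; junk value `x` if `S = ∅`. -/
def prevIn {n : ℕ} (S : Finset (Fin n)) (x : Fin n) : Fin n :=
  if h : (univ.filter fun r : Fin n => cpred x - r ∈ S).Nonempty then
    cpred x - (univ.filter fun r : Fin n => cpred x - r ∈ S).min' h
  else x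

/-- `∂_j(K) = K ∖ {ℓ}`, where `ℓ = j` if `j ∈ K` and otherwise `ℓ` is the first
element of `K` met when reading `j+1, j+2, …` cyclically. -/
def bdSet {n : ℕ} (j : Fin n) (K : Finset (Fin n)) : Finset (Fin n) :=
  K.erase (nextIn K j)

/-- The basis vector `β^{(L)}_K` of the space `𝔅^{(L)}` of formal linear
combinations (modelled inside `ℝ^{Finset (Fin n)}`): the indicator of `K` if `K`
is nonfrozen in `S = {1,…,n} ∖ L`, and `0` if `K` is frozen. -/
noncomputable def betaV {n : ℕ} (L K : Finset (Fin n)) : Finset (Fin n) → ℝ :=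
  if FrozenIn ((univ : Finset (Fin n)) \ L) K then 0 else Pi.single K 1

/-- The `S`-initial points of `K`: elements of `K` whose cyclic predecessor in `S`
does not lie in `K`. -/
def initPts {n : ℕ} (S K : Finset (Fin n)) : Finset (Fin n) :=
  K.filter fun i => prevIn S i ∉ K

/-- `𝓛^{(L)}_K = Σ_{M ∈ {0,1}^t} (−1)^{1+|M|} β^{(L)}_{K_M}`, where `K_M` replaces the
chosen `S`-initial points of `K` by their cyclic predecessors in `S = {1,…,n} ∖ L`. -/
noncomputable def LElt {n : ℕ} (L K : Finset (Fin n)) : Finset (Fin n) → ℝ :=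
  ∑ T ∈ (initPts ((univ : Finset (Fin n)) \ L) K).powerset,
    ((-1 : ℝ) ^ (1 + T.card)) •
      betaV L ((K \ T) ∪ T.image (prevIn ((univ : Finset (Fin n)) \ L)))

/-- The boundary map `∂_j : 𝔅^{(L)} → 𝔅^{(L∪{j})}`, the linear extension of
`β^{(L)}_K ↦ β^{(L∪{j})}_{∂_j(K)}`. -/
noncomputable def bdMap {n : ℕ} (L : Finset (Fin n)) (j : Fin n)
    (x : Finset (Fin n) → ℝ) : Finset (Fin n) → ℝ :=
  ∑ K : Finset (Fin n), x K • betaV (insert j L) (bdSet j K)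

/-- Iterated boundary maps: `bdComp L [j₁, …, jd] x` applies `∂_{j₁}` first (starting
from `𝔅^{(L)}`), then `∂_{j₂}`, etc. -/
noncomputable def bdComp {n : ℕ} :
    Finset (Fin n) → List (Fin n) → (Finset (Fin n) → ℝ) → (Finset (Fin n) → ℝ)
  | _, [], x => x
  | L0, j :: js, x => bdComp (insert j L0) js (bdMap L0 j x)

/-- The cyclic successor of `x` in `S`. -/
def succIn {n : ℕ} (S : Finset (Fin n)) (x : Fin n) : Fin n := nextIn S (csucc x)

/-! Call the first element of `J` after `j` its follower. Whether the follower of `j` is replaced by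
its predecessor or not, `∂_j` gives the same set, and the two terms of `𝓛_J` have opposite signs.
Hence `∂_j 𝓛_J = 0` when `j ∉ J`, while for `j ∈ J` the terms that survive are those of
`𝓛_{J∖{j}}` in `S∖{j}`. Applying `∂_ℓ` for all `ℓ ∈ L` therefore leaves
`Σ_{a,b} c_{L∪{a,b}} 𝓛^{(L)}_{ab}`. Since singletons and cyclically adjacent pairs are frozen,
`𝓛^{(L)}_{ab} = −(β_{ab} − β_{ab⁻} − β_{a⁻b} + β_{a⁻b⁻})` also when `a` and `b` are adjacent, and
summation by parts moves the mixed difference from `β` to `c`. -/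

section FinsetSums

variable {ι R V : Type*}

lemma sum_powerset_neg_one_pow_smul [DecidableEq ι] [Ring R] [AddCommGroup V]
    [Module R V] {s : Finset ι} {l : ι} (hl : l ∈ s) (d : ℕ) (f : Finset ι → V) :
    ∑ T ∈ s.powerset, (-1 : R) ^ (d + #T) • f T =
      ∑ T ∈ (s.erase l).powerset, (-1 : R) ^ (d + #T) • (f T - f (insert l T)) := by
  conv_lhs => rw [← insert_erase hl, sum_powerset_insert (notMem_erase _ _), ← sum_add_distrib]
  refine sum_congr rfl fun T hT => ?_
  have hlT : l ∉ T := fun h => notMem_erase l s (mem_powerset.1 hT h)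
  rw [card_insert_of_notMem hlT, ← add_assoc, pow_succ, mul_neg_one, neg_smul, smul_sub,
    sub_eq_add_neg]

lemma sum_powersetCard_succ_insert [DecidableEq ι] [AddCommMonoid V]
    {s : Finset ι} {j : ι} (hj : j ∉ s) (m : ℕ) (f : Finset ι → V) :
    ∑ J ∈ powersetCard (m + 1) (insert j s), f J =
      ∑ J ∈ powersetCard (m + 1) s, f J + ∑ J ∈ powersetCard m s, f (insert j J) := by
  have hmem : ∀ {m A}, A ∈ powersetCard m s → j ∉ A := fun hA h =>
    hj ((mem_powersetCard.1 hA).1 h)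
  rw [powersetCard_succ_insert hj, sum_union, sum_image]
  · intro A hA B hB hAB
    rw [← erase_insert (hmem hA), hAB, erase_insert (hmem hB)]
  · refine disjoint_left.2 fun A hA hA' => ?_
    obtain ⟨B, -, rfl⟩ := mem_image.1 hA'
    exact hmem hA (mem_insert_self j B)

lemma sum_powersetCard_two [LinearOrder ι] [AddCommMonoid V] (S : Finset ι)
    (F : Finset ι → V) :
    ∑ J ∈ powersetCard 2 S, F J = ∑ i ∈ S, ∑ j ∈ S, if i < j then F {i, j} else 0 := by
  rw [← sum_product' S S fun i j => if i < j then F {i, j} else 0, ← sum_filter]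
  symm
  refine sum_bij (fun q _ => {q.1, q.2}) ?_ ?_ ?_ fun _ _ => rfl
  · rintro ⟨i, j⟩ h
    simp only [mem_filter, mem_product] at h
    exact mem_powersetCard.2 ⟨by simp [insert_subset_iff, h.1], card_pair h.2.ne⟩
  · rintro ⟨i, j⟩ h ⟨i', j'⟩ h' heq
    simp only [mem_filter, mem_product, Finset.ext_iff, mem_insert, mem_singleton] at h h' heq
    grind [heq i, heq j, heq i']
  · intro J hJ
    obtain ⟨hJS, hcard⟩ := mem_powersetCard.1 hJ
    obtain ⟨a, b, hab, rfl⟩ := card_eq_two.1 hcard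
    obtain ⟨ha, hb⟩ : a ∈ S ∧ b ∈ S := by simpa [insert_subset_iff] using hJS
    rcases hab.lt_or_gt with h | h
    · exact ⟨(a, b), by simp [ha, hb, h], rfl⟩
    · exact ⟨(b, a), by simp [ha, hb, h], pair_comm b a⟩

lemma two_nsmul_sum_lt [LinearOrder ι] [AddCommMonoid V] {S : Finset ι} {F : ι → ι → V}
    (hsymm : ∀ i j, F i j = F j i) (hdiag : ∀ i ∈ S, F i i = 0) :
    2 • ∑ i ∈ S, ∑ j ∈ S, (if i < j then F i j else 0) = ∑ i ∈ S, ∑ j ∈ S, F i j := by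
  rw [two_nsmul]
  nth_rewrite 2 [sum_comm]
  simp only [← sum_add_distrib]
  refine sum_congr rfl fun i hi => sum_congr rfl fun j _ => ?_
  rcases lt_trichotomy i j with h | rfl | h
  · simp [h, h.not_gt]
  · simp [hdiag i hi]
  · simp [h, h.not_gt, hsymm i j]

lemma sum_lt_eq_sum_lt_of_symm [LinearOrder ι] [AddCommMonoid V] [IsAddTorsionFree V] {S : Finset ι}
    {F G : ι → ι → V} (hF : ∀ i j, F i j = F j i) (hF₀ : ∀ i ∈ S, F i i = 0)
    (hG : ∀ i j, G i j = G j i) (hG₀ : ∀ i ∈ S, G i i = 0)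
    (h : ∑ i ∈ S, ∑ j ∈ S, F i j = ∑ i ∈ S, ∑ j ∈ S, G i j) :
    ∑ i ∈ S, ∑ j ∈ S, (if i < j then F i j else 0) =
      ∑ i ∈ S, ∑ j ∈ S, if i < j then G i j else 0 := by
  refine nsmul_right_injective two_ne_zero ?_
  simp only [two_nsmul_sum_lt hF hF₀, two_nsmul_sum_lt hG hG₀, h]

end FinsetSums

section MixedDifference

/-- The mixed second difference of `f` for the step `σ` in both arguments. With `σ` the cyclic
successor and `f i j = c_{L ∪ {i, j}}` it is `-ω_{ij}`. -/
def mixedDiff {ι V : Type*} [AddCommGroup V] (σ : ι → ι) (f : ι → ι → V) (i j : ι) : V :=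
  f i j - f i (σ j) - f (σ i) j + f (σ i) (σ j)

variable {ι R V : Type*}

lemma mixedDiff_comm [AddCommGroup V] (σ : ι → ι) {f : ι → ι → V} (hf : ∀ i j, f i j = f j i)
    (i j : ι) : mixedDiff σ f i j = mixedDiff σ f j i := by
  rw [mixedDiff, mixedDiff, hf i j, hf i (σ j), hf (σ i) j, hf (σ i) (σ j), sub_right_comm]

lemma sum_comp_invOn [AddCommMonoid V] {S : Finset ι} {σ τ : ι → ι} (hσ : Set.MapsTo σ S S)
    (hτ : Set.MapsTo τ S S) (hστ : Set.InvOn σ τ S S) (h : ι → ι → V) :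
    ∑ x ∈ S, h x (τ x) = ∑ x ∈ S, h (σ x) x :=
  sum_nbij' τ σ hτ hσ hστ.1 hστ.2 fun x hx => by rw [hστ.1 hx]

lemma sum_smul_mixedDiff [Ring R] [AddCommGroup V] [Module R V] {S : Finset ι} {σ τ : ι → ι}
    (hσ : Set.MapsTo σ S S) (hτ : Set.MapsTo τ S S) (hστ : Set.InvOn σ τ S S)
    (f : ι → ι → R) (g : ι → ι → V) :
    ∑ i ∈ S, ∑ j ∈ S, f i j • mixedDiff τ g i j =
      ∑ i ∈ S, ∑ j ∈ S, mixedDiff σ f i j • g i j := by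
  have hright : ∀ i i', ∑ j ∈ S, f i j • g i' (τ j) = ∑ j ∈ S, f i (σ j) • g i' j := fun i i' =>
    sum_comp_invOn hσ hτ hστ fun j j' => f i j • g i' j'
  have hleft : ∀ f' : ι → ι → R, ∑ i ∈ S, ∑ j ∈ S, f' i j • g (τ i) j =
      ∑ i ∈ S, ∑ j ∈ S, f' (σ i) j • g i j := fun f' =>
    sum_comp_invOn hσ hτ hστ fun i i' => ∑ j ∈ S, f' i j • g i' j
  simp only [mixedDiff, smul_add, smul_sub, add_smul, sub_smul, sum_add_distrib,
    sum_sub_distrib, hright, hleft f, hleft fun i j => f i (σ j)]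

end MixedDifference

section CyclicOrder

variable {n : ℕ} {S K : Finset (Fin n)} {j l p t x y z : Fin n}

lemma val_sub_eq_ite (a b : Fin n) :
    (b - a).val = if a.val ≤ b.val then b.val - a.val else b.val + n - a.val := by
  rw [Fin.val_sub]
  split_ifs with h
  · rw [show n - a.val + b.val = b.val - a.val + n by omega, Nat.add_mod_right]
    exact Nat.mod_eq_of_lt (by omega)
  · rw [Nat.mod_eq_of_lt (by omega)]
    omega

lemma cpred_sub (x y : Fin n) : cpred x - y = (y - x).rev := by
  have hx : (cpred x).val = if 0 < x.val then x.val - 1 else n - 1 := by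
    simp only [cpred]
    split_ifs with h
    · rw [show x.val + (n - 1) = x.val - 1 + n by omega, Nat.add_mod_right]
      exact Nat.mod_eq_of_lt (by omega)
    · exact (Nat.mod_eq_of_lt (by omega)).trans (by omega)
  rw [Fin.ext_iff, Fin.val_rev, val_sub_eq_ite, val_sub_eq_ite, hx]
  split_ifs <;> omega

lemma sub_csucc (x y : Fin n) : y - csucc x = (x - y).rev := by
  have hx : (csucc x).val = if x.val + 1 < n then x.val + 1 else 0 := by
    simp only [csucc]
    split_ifs with h
    · exact Nat.mod_eq_of_lt h
    · rw [show x.val + 1 = n by omega, Nat.mod_self]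
  rw [Fin.ext_iff, Fin.val_rev, val_sub_eq_ite, val_sub_eq_ite, hx]
  split_ifs <;> omega

/- In `Fin n`, the difference `x - j` is the number of steps from `j` to `x`, so `x - j ≤ y - j`
says that reading cyclically from `j` one meets `x` no later than `y`. -/

lemma sub_le_sub_iff_sub_le_sub : z - x ≤ y - x ↔ y - z ≤ y - x := by
  simp only [Fin.le_def, val_sub_eq_ite]
  split_ifs <;> omega

lemma sub_lt_sub_iff_of_ne (h : l ≠ j) : p - j < l - j ↔ j - l ≤ p - l := by
  rw [ne_eq, Fin.ext_iff] at h
  simp only [Fin.lt_def, Fin.le_def, val_sub_eq_ite]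
  split_ifs <;> omega

lemma sub_le_sub_of_sub_lt_sub (hlt : l - j < t - j) (h : l - t ≤ p - t) : l - j ≤ p - j := by
  simp only [Fin.lt_def, Fin.le_def, val_sub_eq_ite] at *
  split_ifs at * <;> omega

lemma sub_le_sub_of_sub_le_sub_of_ne (hzj : z ≠ j) (hx : x - j ≤ p - j) (hz : z - j ≤ p - j)
    (hzx : z - x ≤ j - x) : z - x ≤ p - x := by
  rw [ne_eq, Fin.ext_iff] at hzj
  simp only [Fin.le_def, val_sub_eq_ite] at *
  split_ifs at * <;> omega

lemma eq_or_eq_of_sub_le_sub (hy : x - y ≤ z - y) (hz : x - z ≤ y - z) : x = y ∨ x = z := by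
  simp only [Fin.ext_iff, Fin.le_def, val_sub_eq_ite] at *
  split_ifs at * <;> omega

lemma fin_eq_of_sub_eq_sub (h : x - j = y - j) : x = y := by
  have : NeZero n := .of_pos j.pos
  exact sub_left_inj.1 h

lemma nextIn_eq (hx : x ∈ K) (hmin : ∀ y ∈ K, x - j ≤ y - j) : nextIn K j = x := by
  have : NeZero n := .of_pos j.pos
  have hmem : x - j ∈ univ.filter fun r : Fin n => j + r ∈ K := by simpa using hx
  have hmin' : (univ.filter fun r : Fin n => j + r ∈ K).min' ⟨_, hmem⟩ = x - j :=
    (min'_eq_iff _ _ _).2 ⟨hmem, fun r hr => by simpa using hmin (j + r) (by simpa using hr)⟩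
  rw [nextIn, dif_pos ⟨_, hmem⟩, hmin', add_sub_cancel]

lemma prevIn_eq (hy : y ∈ S) (hmax : ∀ z ∈ S, z - x ≤ y - x) : prevIn S x = y := by
  have : NeZero n := .of_pos x.pos
  have hmem : cpred x - y ∈ univ.filter fun r : Fin n => cpred x - r ∈ S := by simpa using hy
  have hmin' : (univ.filter fun r : Fin n => cpred x - r ∈ S).min' ⟨_, hmem⟩ = cpred x - y := by
    refine (min'_eq_iff _ _ _).2 ⟨hmem, fun r hr => ?_⟩
    have h := hmax (cpred x - r) (by simpa using hr)
    rwa [← Fin.rev_le_rev, ← cpred_sub, ← cpred_sub, sub_sub_cancel] at h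
  rw [prevIn, dif_pos ⟨_, hmem⟩, hmin', sub_sub_cancel]

lemma succIn_eq (hy : y ∈ S) (hmax : ∀ z ∈ S, x - z ≤ x - y) : succIn S x = y :=
  nextIn_eq hy fun z hz => by
    rw [sub_csucc, sub_csucc, Fin.rev_le_rev]
    exact hmax z hz

lemma nextIn_mem (hy : y ∈ K) (j : Fin n) : nextIn K j ∈ K := by
  obtain ⟨x, hx, hmin⟩ := exists_min_image K (· - j) ⟨y, hy⟩
  rwa [nextIn_eq hx hmin]

lemma nextIn_sub_le (hy : y ∈ K) (j : Fin n) : nextIn K j - j ≤ y - j := by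
  obtain ⟨x, hx, hmin⟩ := exists_min_image K (· - j) ⟨y, hy⟩
  rw [nextIn_eq hx hmin]
  exact hmin y hy

lemma prevIn_mem (hy : y ∈ S) (x : Fin n) : prevIn S x ∈ S := by
  obtain ⟨p, hp, hmax⟩ := exists_max_image S (· - x) ⟨y, hy⟩
  rwa [prevIn_eq hp hmax]

lemma sub_le_prevIn_sub (hy : y ∈ S) (x : Fin n) : y - x ≤ prevIn S x - x := by
  obtain ⟨p, hp, hmax⟩ := exists_max_image S (· - x) ⟨y, hy⟩
  rw [prevIn_eq hp hmax]
  exact hmax y hy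

lemma succIn_mem (hy : y ∈ S) (x : Fin n) : succIn S x ∈ S := nextIn_mem hy _

lemma sub_le_sub_succIn (hy : y ∈ S) (x : Fin n) : x - y ≤ x - succIn S x := by
  rw [← Fin.rev_le_rev, ← sub_csucc, ← sub_csucc]
  exact nextIn_sub_le hy _

lemma nextIn_of_mem (hj : j ∈ K) : nextIn K j = j :=
  have : NeZero n := .of_pos j.pos
  nextIn_eq hj fun y _ => by simp

lemma prevIn_ne (hy : y ∈ S) (hyx : y ≠ x) : prevIn S x ≠ x := fun h => by
  have : NeZero n := .of_pos x.pos
  have hle := sub_le_prevIn_sub hy x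
  rw [h, sub_self] at hle
  exact hyx (sub_eq_zero.1 (nonpos_iff_eq_zero.1 hle))

lemma succIn_ne (hy : y ∈ S) (hyx : y ≠ x) : succIn S x ≠ x := fun h => by
  have : NeZero n := .of_pos x.pos
  have hle := sub_le_sub_succIn hy x
  rw [h, sub_self] at hle
  exact hyx (sub_eq_zero.1 (nonpos_iff_eq_zero.1 hle)).symm

lemma succIn_sub_le (hy : y ∈ S) (hyj : y ≠ j) : succIn S j - j ≤ y - j := by
  rw [← not_lt, sub_lt_sub_iff_of_ne (succIn_ne hy hyj), not_le]
  have hle : y - succIn S j ≤ j - succIn S j :=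
    sub_le_sub_iff_sub_le_sub.2 (sub_le_sub_succIn hy j)
  exact lt_of_le_of_ne hle fun h => hyj (fin_eq_of_sub_eq_sub h)

lemma succIn_prevIn (hx : x ∈ S) : succIn S (prevIn S x) = x :=
  succIn_eq hx fun _ hz => sub_le_sub_iff_sub_le_sub.1 (sub_le_prevIn_sub hz x)

lemma prevIn_succIn (hx : x ∈ S) : prevIn S (succIn S x) = x :=
  prevIn_eq hx fun _ hz => sub_le_sub_iff_sub_le_sub.2 (sub_le_sub_succIn hz x)

lemma prevIn_injOn (S : Finset (Fin n)) : Set.InjOn (prevIn S) S :=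
  Set.LeftInvOn.injOn (f₁' := succIn S) fun _ => succIn_prevIn

lemma succIn_eq_of_prevIn_eq (hKS : K ⊆ S) (hx : x ∈ K) (h : prevIn S x = j) :
    succIn K j = x :=
  succIn_eq hx fun z hz => by
    rw [← h, ← sub_le_sub_iff_sub_le_sub]
    exact sub_le_prevIn_sub (hKS hz) x

lemma prevIn_sub_lt (hj : j ∈ S) (hxj : x ≠ j) : prevIn S x - j < x - j :=
  (sub_lt_sub_iff_of_ne hxj).2 (sub_le_prevIn_sub hj x)

lemma succIn_sub_le_prevIn_sub (hKS : K ⊆ S) (ht : t ∈ K) (htl : t ≠ succIn K j) :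
    succIn K j - j ≤ prevIn S t - j := by
  have hprev : succIn K j - t ≤ prevIn S t - t := sub_le_prevIn_sub (hKS (succIn_mem ht j)) t
  rcases eq_or_ne t j with rfl | htj
  · exact hprev
  · have hle : succIn K j - j ≤ t - j := succIn_sub_le ht htj
    exact sub_le_sub_of_sub_lt_sub
      (lt_of_le_of_ne hle fun h => htl (fin_eq_of_sub_eq_sub h).symm) hprev

lemma prevIn_erase_of_ne (hx : x ∈ S) (h : prevIn S x ≠ j) :
    prevIn (S.erase j) x = prevIn S x :=
  prevIn_eq (mem_erase.2 ⟨h, prevIn_mem hx x⟩) fun _ hz =>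
    sub_le_prevIn_sub (mem_of_mem_erase hz) x

lemma prevIn_erase_of_eq (hx : x ∈ S) (hxj : x ≠ j) (h : prevIn S x = j) :
    prevIn (S.erase j) x = prevIn S j := by
  refine prevIn_eq (mem_erase.2 ⟨prevIn_ne hx hxj, prevIn_mem hx j⟩) fun z hz => ?_
  have hzS := mem_of_mem_erase hz
  exact sub_le_sub_of_sub_le_sub_of_ne (ne_of_mem_erase hz) (sub_le_prevIn_sub hx j)
    (sub_le_prevIn_sub hzS j) (h ▸ sub_le_prevIn_sub hzS x)

end CyclicOrder

section Boundary

variable {n : ℕ} {S J K T : Finset (Fin n)} {j l x : Fin n}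

/-- The set `K_M` of the definition of `𝓛_K`, where `T` is the set of points selected by `M`. -/
def shiftSet (S K T : Finset (Fin n)) : Finset (Fin n) :=
  (K \ T) ∪ T.image (prevIn S)

lemma mem_shiftSet : x ∈ shiftSet S K T ↔ (x ∈ K ∧ x ∉ T) ∨ ∃ t ∈ T, prevIn S t = x := by
  simp [shiftSet]

lemma shiftSet_empty (S K : Finset (Fin n)) : shiftSet S K ∅ = K := by simp [shiftSet]

lemma shiftSet_self (S K : Finset (Fin n)) : shiftSet S K K = K.image (prevIn S) := by
  simp [shiftSet]

lemma mem_initPts : x ∈ initPts S K ↔ x ∈ K ∧ prevIn S x ∉ K := by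
  simp [initPts]

lemma initPts_subset : initPts S K ⊆ K := filter_subset _ _

lemma succIn_mem_initPts (hj : j ∈ S) (hl : succIn J j ∈ J) (hlj : succIn J j ≠ j)
    (h : prevIn S (succIn J j) ≠ j ∨ j ∉ J) : succIn J j ∈ initPts S J := by
  refine mem_initPts.2 ⟨hl, fun hp => (prevIn_sub_lt hj hlj).not_ge (succIn_sub_le hp ?_)⟩
  intro hpj
  exact h.elim (· hpj) (· (hpj ▸ hp))

lemma nextIn_shiftSet (hJ : J ⊆ S) (hl : succIn J j ∈ J) (hT : T ⊆ J) (hlT : succIn J j ∉ T)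
    (hjT : j ∈ J → j ∈ T) : nextIn (shiftSet S J T) j = succIn J j := by
  refine nextIn_eq (mem_shiftSet.2 (.inl ⟨hl, hlT⟩)) fun y hy => ?_
  rcases mem_shiftSet.1 hy with ⟨hyJ, hyT⟩ | ⟨t, ht, rfl⟩
  · exact succIn_sub_le hyJ fun h => hyT (h ▸ hjT (h ▸ hyJ))
  · exact succIn_sub_le_prevIn_sub hJ (hT ht) fun h => hlT (h ▸ ht)

lemma nextIn_shiftSet_insert (hJ : J ⊆ S) (hj : j ∈ S) (hlj : succIn J j ≠ j) (hT : T ⊆ J)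
    (hlT : succIn J j ∉ T) (hjT : j ∈ J → j ∈ T) :
    nextIn (shiftSet S J (insert (succIn J j) T)) j = prevIn S (succIn J j) := by
  have hlt := prevIn_sub_lt hj hlj
  refine nextIn_eq (mem_shiftSet.2 (.inr ⟨_, mem_insert_self _ _, rfl⟩)) fun y hy => ?_
  rcases mem_shiftSet.1 hy with ⟨hyJ, hyT⟩ | ⟨t, ht, rfl⟩
  · exact hlt.le.trans (succIn_sub_le hyJ fun h => hyT (mem_insert_of_mem (h ▸ hjT (h ▸ hyJ))))
  · rcases mem_insert.1 ht with rfl | ht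
    · exact le_rfl
    · exact hlt.le.trans (succIn_sub_le_prevIn_sub hJ (hT ht) fun h => hlT (h ▸ ht))

lemma erase_shiftSet_insert (hJ : J ⊆ S) (hl : l ∈ initPts S J) (hT : T ⊆ initPts S J)
    (hlT : l ∉ T) :
    (shiftSet S J (insert l T)).erase (prevIn S l) = (shiftSet S J T).erase l := by
  have hinj : ∀ t ∈ T, prevIn S t ≠ prevIn S l := fun t ht h =>
    hlT (prevIn_injOn S (hJ (initPts_subset (hT ht))) (hJ (initPts_subset hl)) h ▸ ht)
  have hnotMem : ∀ t ∈ T, prevIn S t ∉ J := fun t ht => (mem_initPts.1 (hT ht)).2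
  obtain ⟨hlJ, hpJ⟩ := mem_initPts.1 hl
  ext x
  simp only [mem_erase, mem_shiftSet, mem_insert]
  grind

lemma bdSet_shiftSet_insert (hJ : J ⊆ S) (hj : j ∈ S) (hl : succIn J j ∈ initPts S J)
    (hlj : succIn J j ≠ j) (hT : T ⊆ initPts S J) (hlT : succIn J j ∉ T)
    (hjT : j ∈ J → j ∈ T) :
    bdSet j (shiftSet S J (insert (succIn J j) T)) = bdSet j (shiftSet S J T) := by
  have hlJ := initPts_subset hl
  have hTJ := hT.trans initPts_subset
  rw [bdSet, bdSet, nextIn_shiftSet hJ hlJ hTJ hlT hjT,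
    nextIn_shiftSet_insert hJ hj hlj hTJ hlT hjT, erase_shiftSet_insert hJ hl hT hlT]

lemma prevIn_erase_of_mem_initPts (hJ : J ⊆ S) (hj : j ∈ J) (hx : x ∈ initPts S J) :
    prevIn (S.erase j) x = prevIn S x :=
  prevIn_erase_of_ne (hJ (initPts_subset hx)) fun h => (mem_initPts.1 hx).2 (h ▸ hj)

lemma bdSet_shiftSet_of_mem (hJ : J ⊆ S) (hj : j ∈ J) (hT : T ⊆ initPts S J) (hjT : j ∉ T) :
    bdSet j (shiftSet S J T) = shiftSet (S.erase j) (J.erase j) T := by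
  have hprev : ∀ t ∈ T, prevIn (S.erase j) t = prevIn S t := fun t ht =>
    prevIn_erase_of_mem_initPts hJ hj (hT ht)
  have hnotMem : ∀ t ∈ T, prevIn S t ∉ J := fun t ht => (mem_initPts.1 (hT ht)).2
  rw [bdSet, nextIn_of_mem (mem_shiftSet.2 (.inl ⟨hj, hjT⟩))]
  ext x
  simp only [mem_erase, mem_shiftSet]
  grind

lemma erase_shiftSet_insert_of_prevIn_eq (hJ : J ⊆ S) (hj : j ∈ initPts S J) (hl : l ∈ J)
    (hlj : l ≠ j) (hpl : prevIn S l = j) (hT : T ⊆ initPts S J) :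
    (shiftSet S J (insert j T)).erase l =
      shiftSet (S.erase j) (J.erase j) (insert l T) := by
  obtain ⟨hjJ, hpj⟩ := mem_initPts.1 hj
  have hnotMem : ∀ t ∈ T, prevIn S t ∉ J := fun t ht => (mem_initPts.1 (hT ht)).2
  have hprev : ∀ t ∈ T, prevIn (S.erase j) t = prevIn S t := fun t ht =>
    prevIn_erase_of_mem_initPts hJ hjJ (hT ht)
  have hprev_l : prevIn (S.erase j) l = prevIn S j := prevIn_erase_of_eq (hJ hl) hlj hpl
  ext x
  simp only [mem_erase, mem_shiftSet, mem_insert]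
  grind

/-- If `j` and its successor `l` both lie in `J`, then moving `j` to `j⁻` and deleting `l` is the
same as deleting `j` and moving `l` to `j⁻`, its new predecessor. -/
lemma bdSet_shiftSet_insert_of_prevIn_eq (hJ : J ⊆ S) (hj : j ∈ initPts S J)
    (hl : succIn J j ∈ J) (hlj : succIn J j ≠ j) (hpl : prevIn S (succIn J j) = j)
    (hT : T ⊆ initPts S J) :
    bdSet j (shiftSet S J (insert j T)) =
      shiftSet (S.erase j) (J.erase j) (insert (succIn J j) T) := by
  obtain ⟨hjJ, -⟩ := mem_initPts.1 hj
  have hlT : succIn J j ∉ T := fun h => (mem_initPts.1 (hT h)).2 (hpl.symm ▸ hjJ)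
  rw [bdSet, nextIn_shiftSet hJ hl (insert_subset hjJ (hT.trans initPts_subset))
    (by simp [hlj, hlT]) fun _ => mem_insert_self _ _,
    erase_shiftSet_insert_of_prevIn_eq hJ hj hl hlj hpl hT]

lemma mem_initPts_erase (hJ : J ⊆ S) (hj : j ∈ J) :
    x ∈ initPts (S.erase j) (J.erase j) ↔
      x ∈ J ∧ x ≠ j ∧ (prevIn S x ∉ J ∨ prevIn S x = j ∧ prevIn S j ∉ J) := by
  by_cases hx : x ∈ J ∧ x ≠ j
  · have hne : prevIn S j ≠ j := prevIn_ne (hJ hx.1) hx.2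
    have hof_eq := prevIn_erase_of_eq (S := S) (hJ hx.1) hx.2
    have hof_ne := prevIn_erase_of_ne (S := S) (j := j) (hJ hx.1)
    rw [mem_initPts]
    grind
  · rw [mem_initPts]
    grind

lemma initPts_erase_of_prevIn_mem (hJ : J ⊆ S) (hj : j ∈ J) (hpj : prevIn S j ∈ J) :
    initPts (S.erase j) (J.erase j) = initPts S J := by
  ext x
  rw [mem_initPts_erase hJ hj, mem_initPts]
  grind

lemma initPts_erase_of_prevIn_succIn_eq (hJ : J ⊆ S) (hj : j ∈ initPts S J)
    (hl : succIn J j ∈ J) (hlj : succIn J j ≠ j) (hpl : prevIn S (succIn J j) = j) :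
    initPts (S.erase j) (J.erase j) = insert (succIn J j) ((initPts S J).erase j) := by
  have huniq : ∀ x ∈ J, prevIn S x = j → x = succIn J j := fun x hx h =>
    (succIn_eq_of_prevIn_eq hJ hx h).symm
  ext x
  rw [mem_initPts_erase hJ (initPts_subset hj), mem_insert, mem_erase]
  grind [mem_initPts]

lemma initPts_erase_of_prevIn_succIn_ne (hJ : J ⊆ S) (hj : j ∈ initPts S J)
    (hpl : prevIn S (succIn J j) ≠ j) :
    initPts (S.erase j) (J.erase j) = (initPts S J).erase j := by
  have hnone : ∀ x ∈ J, prevIn S x ≠ j := fun x hx h =>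
    hpl (by rw [succIn_eq_of_prevIn_eq hJ hx h, h])
  ext x
  rw [mem_initPts_erase hJ (initPts_subset hj), mem_erase]
  grind [mem_initPts]

end Boundary

section Frozen

variable {n : ℕ} {S K : Finset (Fin n)} {a b i j l x : Fin n}

lemma mem_cInterval : x ∈ cInterval i j ↔ x - i ≤ j - i := by
  simp [cInterval]

lemma mem_cInterval_iff_of_notMem (h : j ∉ cInterval a b) :
    x ∈ cInterval a b ↔ a - j ≤ x - j ∧ x - j ≤ b - j := by
  simp only [mem_cInterval, Fin.le_def, val_sub_eq_ite] at *
  split_ifs at * <;> omega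

lemma mem_cInterval_csucc_iff (hlb : l - j < b - j) :
    x ∈ cInterval (csucc l) b ↔ l - j < x - j ∧ x - j ≤ b - j := by
  rw [mem_cInterval, sub_csucc, sub_csucc, Fin.rev_le_rev]
  simp only [Fin.lt_def, Fin.le_def, val_sub_eq_ite] at *
  split_ifs at * <;> omega

lemma frozenIn_empty (hj : j ∉ S) : FrozenIn S ∅ := by
  have : NeZero n := .of_pos j.pos
  refine ⟨j, j, (disjoint_iff_inter_eq_empty.1 (disjoint_left.2 fun x hxS hx => hj ?_)).symm⟩
  rw [mem_cInterval, sub_self, nonpos_iff_eq_zero, sub_eq_zero] at hx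
  exact hx ▸ hxS

lemma frozenIn_of_forall_mem_iff (hj : j ∉ S)
    (hK : ∀ x, x ∈ K ↔ x ∈ S ∧ l - j < x - j ∧ x - j ≤ b - j) : FrozenIn S K := by
  rcases lt_or_ge (l - j) (b - j) with hlb | hbl
  · refine ⟨csucc l, b, ext fun x => ?_⟩
    rw [hK, mem_inter, mem_cInterval_csucc_iff hlb]
  · have hempty : K = ∅ := eq_empty_of_forall_notMem fun x hx =>
      (((hK x).1 hx).2.1.trans_le ((hK x).1 hx).2.2).not_ge hbl
    exact hempty ▸ frozenIn_empty hj

lemma FrozenIn.bdSet (hK : FrozenIn S K) (hj : j ∈ S) : FrozenIn (S.erase j) (bdSet j K) := by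
  obtain ⟨a, b, hab⟩ := hK
  by_cases hjK : j ∈ K
  · exact ⟨a, b, by rw [_root_.bdSet, nextIn_of_mem hjK, hab, erase_inter]⟩
  rcases K.eq_empty_or_nonempty with rfl | ⟨y, hy⟩
  · exact frozenIn_empty (notMem_erase j S)
  have hjab : j ∉ cInterval a b := fun h => hjK (hab ▸ mem_inter.2 ⟨hj, h⟩)
  have hmem : ∀ x, x ∈ K ↔ x ∈ S ∧ a - j ≤ x - j ∧ x - j ≤ b - j := fun x => by
    rw [hab, mem_inter, mem_cInterval_iff_of_notMem hjab]
  have hlK : nextIn K j ∈ K := nextIn_mem hy j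
  refine frozenIn_of_forall_mem_iff (notMem_erase j S) (l := nextIn K j) (b := b) fun x => ?_
  rw [_root_.bdSet, mem_erase, mem_erase]
  constructor
  · rintro ⟨hxl, hx⟩
    exact ⟨⟨fun h => hjK (h ▸ hx), ((hmem x).1 hx).1⟩, lt_of_le_of_ne (nextIn_sub_le hx j)
      fun h => hxl (fin_eq_of_sub_eq_sub h).symm, ((hmem x).1 hx).2.2⟩
  · rintro ⟨⟨-, hxS⟩, hlx, hxb⟩
    exact ⟨fun h => hlx.ne (h ▸ rfl), (hmem x).2 ⟨hxS, ((hmem _).1 hlK).2.1.trans hlx.le, hxb⟩⟩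

end Frozen

section BoundaryMap

variable {n m : ℕ} {L J : Finset (Fin n)} {j : Fin n}

lemma LElt_eq_sum_shiftSet (L K : Finset (Fin n)) :
    LElt L K = ∑ T ∈ (initPts (univ \ L) K).powerset,
      (-1 : ℝ) ^ (1 + #T) • betaV L (shiftSet (univ \ L) K T) := rfl

lemma bdMap_sum_smul {ι : Type*} (L : Finset (Fin n)) (j : Fin n) (s : Finset ι) (a : ι → ℝ)
    (f : ι → Finset (Fin n) → ℝ) :
    bdMap L j (∑ i ∈ s, a i • f i) = ∑ i ∈ s, a i • bdMap L j (f i) := by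
  simp only [bdMap, Finset.sum_apply, Pi.smul_apply, sum_smul, smul_sum, smul_assoc]
  exact sum_comm

lemma bdMap_betaV (hj : j ∉ L) (K : Finset (Fin n)) :
    bdMap L j (betaV L K) = betaV (insert j L) (bdSet j K) := by
  by_cases hK : FrozenIn (univ \ L) K
  · have hbd : FrozenIn (univ \ insert j L) (bdSet j K) := by
      rw [sdiff_insert]
      exact hK.bdSet (by simpa using hj)
    simp [bdMap, betaV, hK, hbd]
  · rw [bdMap, betaV, if_neg hK, sum_eq_single K]
    · simp
    · intro K' _ hne
      simp [hne]
    · simp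

lemma bdMap_LElt (hj : j ∉ L) (J : Finset (Fin n)) :
    bdMap L j (LElt L J) = ∑ T ∈ (initPts (univ \ L) J).powerset,
      (-1 : ℝ) ^ (1 + #T) • betaV (insert j L) (bdSet j (shiftSet (univ \ L) J T)) := by
  rw [LElt_eq_sum_shiftSet, bdMap_sum_smul]
  exact sum_congr rfl fun T _ => congrArg _ (bdMap_betaV hj _)

lemma bdMap_LElt_of_notMem (hj : j ∉ L) (hJ : J ⊆ univ \ L) (hne : J.Nonempty) (hjJ : j ∉ J) :
    bdMap L j (LElt L J) = 0 := by
  have hjS : j ∈ univ \ L := by simpa using hj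
  obtain ⟨y, hy⟩ := hne
  have hlJ : succIn J j ∈ J := succIn_mem hy j
  have hlj : succIn J j ≠ j := fun h => hjJ (h ▸ hlJ)
  have hl := succIn_mem_initPts hjS hlJ hlj (.inr hjJ)
  rw [bdMap_LElt hj, sum_powerset_neg_one_pow_smul hl]
  refine sum_eq_zero fun T hT => ?_
  obtain ⟨hT, hlT⟩ := subset_erase.1 (mem_powerset.1 hT)
  rw [bdSet_shiftSet_insert hJ hjS hl hlj hT hlT fun h => absurd h hjJ, sub_self, smul_zero]

lemma LElt_insert_erase (L J : Finset (Fin n)) (j : Fin n) :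
    LElt (insert j L) (J.erase j) =
      ∑ T ∈ (initPts ((univ \ L).erase j) (J.erase j)).powerset, (-1 : ℝ) ^ (1 + #T) •
        betaV (insert j L) (shiftSet ((univ \ L).erase j) (J.erase j) T) := by
  rw [LElt_eq_sum_shiftSet, sdiff_insert]

lemma bdMap_LElt_of_prevIn_mem (hj : j ∉ L) (hJ : J ⊆ univ \ L) (hjJ : j ∈ J)
    (hpj : prevIn (univ \ L) j ∈ J) :
    bdMap L j (LElt L J) = LElt (insert j L) (J.erase j) := by
  rw [bdMap_LElt hj, LElt_insert_erase, initPts_erase_of_prevIn_mem hJ hjJ hpj]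
  refine sum_congr rfl fun T hT => ?_
  have hT := mem_powerset.1 hT
  rw [bdSet_shiftSet_of_mem hJ hjJ hT fun h => (mem_initPts.1 (hT h)).2 hpj]

lemma bdMap_LElt_of_prevIn_succIn_eq (hj : j ∉ L) (hJ : J ⊆ univ \ L)
    (hjJ : j ∈ initPts (univ \ L) J) (hlJ : succIn J j ∈ J) (hlj : succIn J j ≠ j)
    (hpl : prevIn (univ \ L) (succIn J j) = j) :
    bdMap L j (LElt L J) = LElt (insert j L) (J.erase j) := by
  have hl : succIn J j ∉ (initPts (univ \ L) J).erase j := fun h =>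
    (mem_initPts.1 (mem_of_mem_erase h)).2 (hpl.symm ▸ initPts_subset hjJ)
  rw [bdMap_LElt hj, LElt_insert_erase, initPts_erase_of_prevIn_succIn_eq hJ hjJ hlJ hlj hpl,
    sum_powerset_neg_one_pow_smul hjJ, sum_powerset_neg_one_pow_smul (mem_insert_self _ _),
    erase_insert hl]
  refine sum_congr rfl fun T hT => ?_
  obtain ⟨hT, hjT⟩ := subset_erase.1 (mem_powerset.1 hT)
  rw [bdSet_shiftSet_of_mem hJ (initPts_subset hjJ) hT hjT,
    bdSet_shiftSet_insert_of_prevIn_eq hJ hjJ hlJ hlj hpl hT]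

lemma bdMap_LElt_of_prevIn_succIn_ne (hj : j ∉ L) (hJ : J ⊆ univ \ L)
    (hjJ : j ∈ initPts (univ \ L) J) (hlJ : succIn J j ∈ J) (hlj : succIn J j ≠ j)
    (hpl : prevIn (univ \ L) (succIn J j) ≠ j) :
    bdMap L j (LElt L J) = LElt (insert j L) (J.erase j) := by
  have hjS := hJ (initPts_subset hjJ)
  have hl := succIn_mem_initPts hjS hlJ hlj (.inl hpl)
  have hcancel : ∑ T ∈ ((initPts (univ \ L) J).erase j).powerset, (-1 : ℝ) ^ (1 + #T) •
      betaV (insert j L) (bdSet j (shiftSet (univ \ L) J (insert j T))) = 0 := by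
    rw [sum_powerset_neg_one_pow_smul (mem_erase.2 ⟨hlj, hl⟩)]
    refine sum_eq_zero fun T hT => ?_
    obtain ⟨hT, hlT⟩ := subset_erase.1 (mem_powerset.1 hT)
    rw [insert_comm, bdSet_shiftSet_insert hJ hjS hl hlj
      (insert_subset hjJ (hT.trans (erase_subset _ _))) (by simp [hlj, hlT])
      fun _ => mem_insert_self _ _, sub_self, smul_zero]
  rw [bdMap_LElt hj, LElt_insert_erase, initPts_erase_of_prevIn_succIn_ne hJ hjJ hpl,
    sum_powerset_neg_one_pow_smul hjJ]
  simp only [smul_sub]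
  rw [sum_sub_distrib, hcancel, sub_zero]
  refine sum_congr rfl fun T hT => ?_
  obtain ⟨hT, hjT⟩ := subset_erase.1 (mem_powerset.1 hT)
  rw [bdSet_shiftSet_of_mem hJ (initPts_subset hjJ) hT hjT]

lemma bdMap_LElt_of_mem (hj : j ∉ L) (hJ : J ⊆ univ \ L) (hjJ : j ∈ J)
    (hne : (J.erase j).Nonempty) :
    bdMap L j (LElt L J) = LElt (insert j L) (J.erase j) := by
  obtain ⟨y, hy⟩ := hne
  obtain ⟨hyj, hyJ⟩ := mem_erase.1 hy
  have hlJ : succIn J j ∈ J := succIn_mem hyJ j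
  have hlj : succIn J j ≠ j := succIn_ne hyJ hyj
  by_cases hpj : prevIn (univ \ L) j ∈ J
  · exact bdMap_LElt_of_prevIn_mem hj hJ hjJ hpj
  have hj_init := mem_initPts.2 ⟨hjJ, hpj⟩
  by_cases hpl : prevIn (univ \ L) (succIn J j) = j
  · exact bdMap_LElt_of_prevIn_succIn_eq hj hJ hj_init hlJ hlj hpl
  · exact bdMap_LElt_of_prevIn_succIn_ne hj hJ hj_init hlJ hlj hpl

lemma bdMap_sum_LElt (hj : j ∉ L) (hm : m ≠ 0) (c : Finset (Fin n) → ℝ) :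
    bdMap L j (∑ J ∈ powersetCard (m + 1) (univ \ L), c (L ∪ J) • LElt L J) =
      ∑ J ∈ powersetCard m (univ \ insert j L), c (insert j L ∪ J) • LElt (insert j L) J := by
  have hj' : j ∉ univ \ insert j L := by simp
  have hins : univ \ L = insert j (univ \ insert j L) := by
    rw [sdiff_insert, insert_erase (by simpa using hj)]
  rw [bdMap_sum_smul, hins, sum_powersetCard_succ_insert hj', sum_eq_zero, zero_add]
  · refine sum_congr rfl fun J hJ => ?_
    obtain ⟨hJS, hcard⟩ := mem_powersetCard.1 hJ
    have hjJ : j ∉ J := fun h => hj' (hJS h)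
    have hne : J.Nonempty := card_ne_zero.1 (hcard ▸ hm)
    rw [bdMap_LElt_of_mem hj (hins ▸ insert_subset_insert j hJS) (mem_insert_self j J)
      (by rwa [erase_insert hjJ]), erase_insert hjJ, union_insert, insert_union]
  · intro J hJ
    obtain ⟨hJS, hcard⟩ := mem_powersetCard.1 hJ
    rw [bdMap_LElt_of_notMem hj (hins ▸ hJS.trans (subset_insert _ _)) (card_pos.1 (by omega))
      fun h => hj' (hJS h), smul_zero]

lemma bdComp_sum_LElt (hm : m ≠ 0) (c : Finset (Fin n) → ℝ) {l : List (Fin n)} (hl : l.Nodup)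
    (hlL : ∀ x ∈ l, x ∉ L) :
    bdComp L l (∑ J ∈ powersetCard (m + l.length) (univ \ L), c (L ∪ J) • LElt L J) =
      ∑ J ∈ powersetCard m (univ \ (L ∪ l.toFinset)),
        c (L ∪ l.toFinset ∪ J) • LElt (L ∪ l.toFinset) J := by
  induction l generalizing L with
  | nil => simp [bdComp]
  | cons j l ih =>
    obtain ⟨hjl, hl⟩ := List.nodup_cons.1 hl
    obtain ⟨hjL, hlL⟩ := List.forall_mem_cons.1 hlL
    have hlj : ∀ x ∈ l, x ∉ insert j L := fun x hx => by
      rw [mem_insert, not_or]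
      exact ⟨fun h => hjl (h ▸ hx), hlL x hx⟩
    rw [bdComp, List.length_cons, ← add_assoc, bdMap_sum_LElt hjL (by omega), ih hl hlj,
      List.toFinset_cons, union_insert, insert_union]

end BoundaryMap

section Pairs

variable {n : ℕ} {L T : Finset (Fin n)} {a b : Fin n}

lemma betaV_eq_zero_of_eq_inter (i j : Fin n) {K : Finset (Fin n)}
    (h : K = (univ \ L) ∩ cInterval i j) : betaV L K = 0 :=
  if_pos ⟨i, j, h⟩

lemma betaV_singleton (ha : a ∉ L) : betaV L {a} = 0 := by
  have : NeZero n := .of_pos a.pos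
  refine betaV_eq_zero_of_eq_inter a a (ext fun x => ?_)
  rw [mem_inter, mem_cInterval, sub_self, nonpos_iff_eq_zero, sub_eq_zero]
  simp only [mem_singleton, mem_sdiff, mem_univ, true_and]
  grind

lemma betaV_prevIn_pair (ha : a ∉ L) : betaV L {prevIn (univ \ L) a, a} = 0 := by
  have : NeZero n := .of_pos a.pos
  have haS : a ∈ univ \ L := by simpa using ha
  refine betaV_eq_zero_of_eq_inter (prevIn (univ \ L) a) a (ext fun x => ?_)
  rw [mem_insert, mem_singleton, mem_inter, mem_cInterval]
  constructor
  · rintro (rfl | rfl)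
    · exact ⟨prevIn_mem haS a, by simp⟩
    · exact ⟨haS, le_rfl⟩
  · rintro ⟨hxS, hx⟩
    exact eq_or_eq_of_sub_le_sub hx (sub_le_prevIn_sub hxS a)

lemma shiftSet_pair_singleton (S : Finset (Fin n)) (hab : a ≠ b) :
    shiftSet S {a, b} {a} = {prevIn S a, b} := by
  ext x
  simp only [mem_shiftSet, mem_insert, mem_singleton]
  grind

lemma betaV_shiftSet_pair_of_prevIn_eq (hb : b ∉ L) (hab : a ≠ b)
    (hpa : prevIn (univ \ L) a = b) (haT : a ∈ T) (hT : T ⊆ {a, b}) :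
    betaV L (shiftSet (univ \ L) {a, b} T) = 0 := by
  by_cases hbT : b ∈ T
  · rw [hT.antisymm (by simp [insert_subset_iff, haT, hbT]), shiftSet_self, image_insert,
      image_singleton, hpa, pair_comm, betaV_prevIn_pair hb]
  · have hTa : T = {a} := by grind
    rw [hTa, shiftSet_pair_singleton _ hab, hpa, pair_eq_singleton, betaV_singleton hb]

lemma LElt_pair_eq_sum_powerset (ha : a ∉ L) (hb : b ∉ L) (hab : a ≠ b) :
    LElt L {a, b} = ∑ T ∈ ({a, b} : Finset (Fin n)).powerset,
      (-1 : ℝ) ^ (1 + #T) • betaV L (shiftSet (univ \ L) {a, b} T) := by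
  rw [LElt_eq_sum_shiftSet]
  refine sum_subset (powerset_mono.2 initPts_subset) fun T hT hT' => ?_
  rw [mem_powerset] at hT hT'
  obtain ⟨t, htT, ht⟩ := not_subset.1 hT'
  have hp : prevIn (univ \ L) t ∈ ({a, b} : Finset (Fin n)) := by
    by_contra h
    exact ht (mem_initPts.2 ⟨hT htT, h⟩)
  have hpa : prevIn (univ \ L) a ≠ a := prevIn_ne (by simpa using hb) hab.symm
  have hpb : prevIn (univ \ L) b ≠ b := prevIn_ne (by simpa using ha) hab
  suffices betaV L (shiftSet (univ \ L) {a, b} T) = 0 by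
    rw [this, smul_zero]
  rw [mem_insert, mem_singleton] at hp
  rcases mem_insert.1 (hT htT) with rfl | h
  · exact betaV_shiftSet_pair_of_prevIn_eq hb hab (hp.resolve_left hpa) htT hT
  · obtain rfl := mem_singleton.1 h
    rw [pair_comm]
    exact betaV_shiftSet_pair_of_prevIn_eq ha hab.symm (hp.resolve_right hpb) htT
      (pair_comm a t ▸ hT)

lemma LElt_pair (ha : a ∉ L) (hb : b ∉ L) (hab : a ≠ b) :
    LElt L {a, b} = -mixedDiff (prevIn (univ \ L)) (fun i j => betaV L {i, j}) a b := by
  have haE : a ∉ ({b} : Finset (Fin n)) := by simpa using hab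
  have hS : shiftSet (univ \ L) {a, b} {b} = {a, prevIn (univ \ L) b} := by
    rw [pair_comm, shiftSet_pair_singleton _ hab.symm, pair_comm]
  rw [LElt_pair_eq_sum_powerset ha hb hab, sum_powerset_neg_one_pow_smul (mem_insert_self a {b}),
    erase_insert haE, sum_powerset_neg_one_pow_smul (mem_singleton_self b), erase_singleton]
  simp only [powerset_empty, sum_singleton, insert_empty_eq, card_empty, hS, shiftSet_empty,
    shiftSet_self, shiftSet_pair_singleton _ hab, image_insert, image_singleton, mixedDiff]
  module

lemma mixedDiff_betaV_self (ha : a ∉ L) :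
    mixedDiff (prevIn (univ \ L)) (fun i j => betaV L {i, j}) a a = 0 := by
  have haS : a ∈ univ \ L := by simpa using ha
  have hpa : prevIn (univ \ L) a ∉ L := (mem_sdiff.1 (prevIn_mem haS a)).2
  simp [mixedDiff, betaV_singleton ha, betaV_singleton hpa, betaV_prevIn_pair ha,
    pair_comm a (prevIn _ _)]

lemma sum_lt_smul_LElt_pair (L : Finset (Fin n)) {f : Fin n → Fin n → ℝ}
    (hf : ∀ i j, f i j = f j i) :
    ∑ i ∈ univ \ L, ∑ j ∈ univ \ L, (if i < j then f i j • LElt L {i, j} else 0) =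
      ∑ i ∈ univ \ L, ∑ j ∈ univ \ L,
        if i < j then -mixedDiff (succIn (univ \ L)) f i j • betaV L {i, j} else 0 := by
  have hmem : ∀ i ∈ univ \ L, i ∉ L := fun i hi => (mem_sdiff.1 hi).2
  have hbeta : ∀ i j, betaV L {i, j} = betaV L {j, i} := fun i j => by rw [pair_comm]
  calc
    _ = ∑ i ∈ univ \ L, ∑ j ∈ univ \ L, if i < j then
          -(f i j • mixedDiff (prevIn (univ \ L)) (fun i j => betaV L {i, j}) i j) else 0 := by
      refine sum_congr rfl fun i hi => sum_congr rfl fun j hj => ?_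
      split_ifs with hij
      · rw [LElt_pair (hmem i hi) (hmem j hj) hij.ne, smul_neg]
      · rfl
    _ = _ := by
      refine sum_lt_eq_sum_lt_of_symm (fun i j => by rw [hf, mixedDiff_comm _ hbeta])
        (fun i hi => by rw [mixedDiff_betaV_self (hmem i hi), smul_zero, neg_zero])
        (fun i j => by rw [hbeta, mixedDiff_comm _ hf])
        (fun i hi => by rw [pair_eq_singleton, betaV_singleton (hmem i hi), smul_zero]) ?_
      simp only [neg_smul, sum_neg_distrib]
      exact congrArg _ (sum_smul_mixedDiff (fun i hi => succIn_mem hi i)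
        (fun i hi => prevIn_mem hi i)
        ⟨fun i hi => succIn_prevIn hi, fun i hi => prevIn_succIn hi⟩ f _)

lemma sum_lt_smul_betaV_pair (L : Finset (Fin n)) (w : Fin n → Fin n → ℝ) :
    ∑ i ∈ univ \ L, ∑ j ∈ univ \ L, (if i < j then w i j • betaV L {i, j} else 0) =
      ∑ i, ∑ j, if i ∈ univ \ L ∧ j ∈ univ \ L ∧ i < j ∧ prevIn (univ \ L) i ≠ j ∧
        prevIn (univ \ L) j ≠ i then w i j • betaV L {i, j} else 0 := by
  have hadj : ∀ i ∈ univ \ L, ∀ j ∈ univ \ L,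
      prevIn (univ \ L) i = j ∨ prevIn (univ \ L) j = i → betaV L {i, j} = 0 := by
    rintro i hi j hj (rfl | rfl)
    · rw [pair_comm, betaV_prevIn_pair (mem_sdiff.1 hi).2]
    · exact betaV_prevIn_pair (mem_sdiff.1 hj).2
  rw [← sum_subset (subset_univ _) fun i _ hi => sum_eq_zero fun j _ => if_neg fun h => hi h.1]
  refine sum_congr rfl fun i hi => ?_
  rw [← sum_subset (subset_univ _) fun j _ hj => if_neg fun h => hj h.2.1]
  refine sum_congr rfl fun j hj => ?_
  grind [smul_zero]

end Pairs

theorem stmt14_general {n : ℕ} (c : Finset (Fin n) → ℝ) {L : Finset (Fin n)}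
    {l : List (Fin n)} (hl : l.Nodup) (hlL : l.toFinset = L) :
    bdComp ∅ l (∑ J ∈ powersetCard (#L + 2) (univ : Finset (Fin n)), c J • LElt ∅ J) =
      ∑ i : Fin n, ∑ j : Fin n,
        if i ∈ univ \ L ∧ j ∈ univ \ L ∧ i < j ∧ prevIn (univ \ L) i ≠ j ∧
            prevIn (univ \ L) j ≠ i then
          -mixedDiff (succIn (univ \ L)) (fun i j => c (L ∪ {i, j})) i j • betaV L {i, j}
        else 0 := by
  have hcard : #L + 2 = 2 + l.length := by
    rw [← hlL, List.toFinset_card_of_nodup hl, add_comm]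
  have hcomp := bdComp_sum_LElt two_ne_zero c hl (L := ∅) (by simp)
  simp only [sdiff_empty, empty_union, hlL] at hcomp
  rw [hcard, hcomp, sum_powersetCard_two,
    sum_lt_smul_LElt_pair L fun i j => by rw [pair_comm], sum_lt_smul_betaV_pair]

/-- for weights `c` on `k`-subsets and a `(k−2)`-subset
`L = {ℓ_1 < ⋯ < ℓ_{k−2}}`, the iterated boundary of `Σ_J c_J 𝓛_J` is
`Σ_{{i,j}} ω^{(L)}_{ij} β^{(L)}_{ij}`, the sum over 2-element subsets `{i,j}` of
`S = {1,…,n}∖L` whose elements are not cyclically adjacent in `S`, where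
`ω^{(L)}_{ij} = −(c_{L∪{i,j}} − c_{L∪{i,j⁺}} − c_{L∪{i⁺,j}} + c_{L∪{i⁺,j⁺}})`
with `i⁺, j⁺` the cyclic successors of `i, j` in `S`. -/
theorem stmt14 {n k : ℕ} (hk : 2 ≤ k) (hn : k + 2 ≤ n)
    (c : Finset (Fin n) → ℝ)
    (L : Finset (Fin n)) (hL : L.card = k - 2) :
    bdComp ∅ ((L.sort (· ≤ ·)).reverse)
        (∑ J ∈ powersetCard k (univ : Finset (Fin n)), c J • LElt ∅ J) =
      ∑ i : Fin n, ∑ j : Fin n,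
        (if i ∈ (univ : Finset (Fin n)) \ L ∧ j ∈ (univ : Finset (Fin n)) \ L ∧
            i < j ∧ prevIn (univ \ L) i ≠ j ∧ prevIn (univ \ L) j ≠ i then
          (-(c (L ∪ {i, j}) - c (L ∪ {i, succIn (univ \ L) j})
              - c (L ∪ {succIn (univ \ L) i, j})
              + c (L ∪ {succIn (univ \ L) i, succIn (univ \ L) j}))) • betaV L {i, j}
        else 0) := by
  obtain rfl : k = #L + 2 := by omega
  exact stmt14_general c (List.nodup_reverse.2 (sort_nodup L _))
    (by rw [List.toFinset_reverse, sort_toFinset])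
end
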